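/- Right-wing Bäcklund transformations for the Wronskian supercharacters. For any fixed b ∈ B1 and f ∈ F1, writing B1′ = B1 with b removed and F1′ = F1 with f removed, the Wronskian supercharacters satisfy, for all a, s ∈ ℤ: (1) χ_{a+1,s}·χ^{B1′}_{a,s} − χ_{a,s}·χ^{B1′}_{a+1,s} = z_b·χ_{a+1,s−1}·χ^{B1′}_{a,s+1}; (2) χ_{a,s+1}·χ^{B1′}_{a,s} − χ_{a,s}·χ^{B1′}_{a,s+1} = z_b·χ_{a+1,s}·χ^{B1′}_{a−1,s+1}; (3) χ^{F1′}_{a+1,s}·χ_{a,s} − χ^{F1′}_{a,s}·χ_{a+1,s} = z_f·χ^{F1′}_{a+1,s−1}·χ_{a,s+1}; (4) χ^{F1′}_{a,s+1}·χ_{a,s} − χ^{F1′}_{a,s}·χ_{a,s+1} = z_f·χ^{F1′}_{a+1,s}·χ_{a−1,s+1}. Here χ = χ^{B1,B2,F1,F2}, χ^{B1′} denotes the Wronskian supercharacter built with B1 replaced by B1′ (so m1 decreased by 1, all other data unchanged), and χ^{F1′} that built with F1 replaced by F1′ (n1 decreased by 1). -/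

import Mathlib

open scoped BigOperators

namespace Stmt1

/-- The integer segment tuple `⟨a,b⟩ = (a, a+1, …, b)`, empty when `b < a`. -/
def seg (a b : ℤ) : List ℤ := (List.range (b - a + 1).toNat).map (fun k => a + (k : ℤ))

/-- Product of `g x y` over ordered pairs `x ≺ y` in the list `L`. -/
def pairProd {ι : Type*} (L : List ι) (g : ι → ι → ℂ) : ℂ :=
  ∏ i : Fin L.length, ∏ j : Fin L.length, if i < j then g (L.get i) (L.get j) else 1

/-- Product of `g x` over a list. -/
def prodL {ι : Type*} (L : List ι) (g : ι → ℂ) : ℂ := (L.map g).prod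

/-- Product of `g x y` over pairs `(x, y) ∈ L × M`. -/
def prodLL {ι : Type*} (L M : List ι) (g : ι → ι → ℂ) : ℂ :=
  (L.map (fun x => (M.map (g x)).prod)).prod

/-- Determinant of the square matrix whose rows and columns are labelled by the given
key lists (by convention `0` if the two lists have different lengths). -/
noncomputable def listDet {α β : Type*} (rows : List α) (cols : List β) (e : α → β → ℂ) : ℂ :=
  if h : rows.length = cols.length then
    Matrix.det (Matrix.of fun i j : Fin rows.length =>
      e (rows.get i) (cols.get (Fin.cast h j)))
  else 0

/-- The sparse determinant `Δ^{B1,B2,R,(η)}_{F,S,T1,T2}`. -/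
noncomputable def Delta {ι : Type*} (z : ι → ℂ) (B1 B2 F : List ι)
    (R S T1 T2 : List ℤ) (η : ℤ) : ℂ :=
  listDet
    ((B1.map (Sum.inl : ι → ι ⊕ (ι ⊕ ℤ)) ++
      B2.map (fun b => (Sum.inr (Sum.inl b) : ι ⊕ (ι ⊕ ℤ))) ++
      R.map (fun r => (Sum.inr (Sum.inr r) : ι ⊕ (ι ⊕ ℤ)))))
    ((F.map (Sum.inl : ι → ι ⊕ (ℤ ⊕ (ℤ ⊕ ℤ))) ++
      S.map (fun j => (Sum.inr (Sum.inl j) : ι ⊕ (ℤ ⊕ (ℤ ⊕ ℤ)))) ++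
      T1.map (fun j => (Sum.inr (Sum.inr (Sum.inl j)) : ι ⊕ (ℤ ⊕ (ℤ ⊕ ℤ)))) ++
      T2.map (fun j => (Sum.inr (Sum.inr (Sum.inr j)) : ι ⊕ (ℤ ⊕ (ℤ ⊕ ℤ))))))
    (fun row col =>
      match row, col with
      | Sum.inl b, Sum.inl f => 1 / (z b - z f)
      | Sum.inl b, Sum.inr (Sum.inl j) => z b ^ (j - 1)
      | Sum.inl b, Sum.inr (Sum.inr (Sum.inl j)) => z b ^ (j - 1)
      | Sum.inl _, Sum.inr (Sum.inr (Sum.inr _)) => 0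
      | Sum.inr (Sum.inl b), Sum.inl f => (-z f / z b) ^ η / (z b - z f)
      | Sum.inr (Sum.inl b), Sum.inr (Sum.inl j) => z b ^ (j - 1)
      | Sum.inr (Sum.inl _), Sum.inr (Sum.inr (Sum.inl _)) => 0
      | Sum.inr (Sum.inl b), Sum.inr (Sum.inr (Sum.inr j)) => z b ^ (j - 1)
      | Sum.inr (Sum.inr r), Sum.inl f => (-z f) ^ (r - 1)
      | Sum.inr (Sum.inr _), Sum.inr _ => 0)

/-- The denominator formula `D(B|F)`. -/
noncomputable def Dden {ι : Type*} (z : ι → ℂ) (B F : List ι) : ℂ :=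
  pairProd B (fun b b' => z b - z b') * pairProd F (fun f f' => z f' - z f) /
    prodLL B F (fun b f => z b - z f)

/-- `χ` is the Wronskian supercharacter family for the data `(z, B1, B2, F1, F2)`:
it vanishes outside the generalized T-hook and is given by the eight regional
sparse determinant formulas inside the hook. -/
def IsChi {ι : Type*} (z : ι → ℂ) (B1 B2 F1 F2 : List ι) (χ : ℤ → ℤ → ℂ) : Prop :=
  let m1 : ℤ := B1.length
  let m2 : ℤ := B2.length
  let n1 : ℤ := F1.length
  let n2 : ℤ := F2.length
  let η1 : ℤ := m1 - n1
  let η2 : ℤ := m2 - n2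
  let θ : ℤ := (m1 + m2) * (m1 + m2 - 1) / 2 + (n1 + n2) * (n1 + n2 - 1) / 2
  let F : List ι := F1 ++ F2
  let Dd : ℂ := Dden z (B1 ++ B2) F
  (∀ a s : ℤ, (a < 0 ∨ (m1 < a ∧ n1 < s) ∨ (m2 < a ∧ s < -n2)) → χ a s = 0) ∧
  (∀ a s : ℤ, s + η1 ≤ a → -s + η2 ≤ a → 0 ≤ a → -η1 ≤ s → s ≤ η2 →
    χ a s = (-1 : ℂ) ^ ((s + η1) * (s + n2) + θ) *
      Delta z B1 B2 F [] [] (seg 1 (s + η1)) (seg (s - a + η1 + 1) (-a + η1 + η2))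
        (a - s - η1) / Dd) ∧
  (∀ a s : ℤ, s + η1 ≤ a → -s + η2 ≤ a → 0 ≤ a → -η1 ≤ s → η2 ≤ s →
    χ a s = (-1 : ℂ) ^ ((s + η1) * (s + n2) + θ) *
      Delta z B1 B2 F (seg (a - s - η1 + 1) (a - η1 - η2)) [] (seg 1 (s + η1)) []
        (a - s - η1) / Dd) ∧
  (∀ a s : ℤ, s + η1 ≤ a → -s + η2 ≤ a → 0 ≤ a → s ≤ -η1 → s ≤ η2 →
    χ a s = (-1 : ℂ) ^ ((s + η1) * m2 + θ) *
      Delta z B1 B2 F (seg 1 (-s - η1)) [] [] (seg (s - a + η1 + 1) (-a + η1 + η2))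
        (a - s - η1) / Dd) ∧
  (∀ a s : ℤ, s + η1 ≤ a → -s + η2 ≤ a → 0 ≤ a → η2 ≤ s → s ≤ -η1 →
    χ a s = (-1 : ℂ) ^ ((s + η1) * m2 + θ) *
      Delta z B1 B2 F (seg 1 (-s - η1) ++ seg (a - s - η1 + 1) (a - η1 - η2)) [] [] []
        (a - s - η1) / Dd) ∧
  (∀ a s : ℤ, a ≤ s + η1 → a ≤ η1 + η2 →
    χ a s = (-1 : ℂ) ^ (a * m2 + θ) *
      Delta z B1 B2 F [] (seg 1 (-a + η1 + η2)) (seg (s - a + η1 + 1) (s + η1)) [] 0 / Dd) ∧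
  (∀ a s : ℤ, η1 + η2 ≤ a → a ≤ s + η1 →
    χ a s = (-1 : ℂ) ^ (a * (η1 + n2 + 1) + θ) *
      Delta z B1 B2 F (seg 1 (a - η1 - η2)) [] (seg (s - a + η1 + 1) (s + η1)) [] 0 / Dd) ∧
  (∀ a s : ℤ, a ≤ -s + η2 → a ≤ η1 + η2 →
    χ a s = (-1 : ℂ) ^ (a * (1 + m2) + θ) *
      Delta z B1 B2 F [] (seg 1 (-a + η1 + η2)) [] (seg (s - a + η1 + 1) (s + η1)) 0 / Dd) ∧
  (∀ a s : ℤ, η1 + η2 ≤ a → a ≤ -s + η2 →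
    χ a s = (-1 : ℂ) ^ (a * (η1 + n2) + θ) *
      Delta z B1 B2 F (seg 1 (a - η1 - η2)) [] [] (seg (s - a + η1 + 1) (s + η1)) 0 / Dd)


/-!
Row operations with the Lagrange weights of the parameters turn the sparse determinants of all eight
regions into Hankel determinants of one and the same sequence `superSeq B₁ B₂ F`, a Jacobi–Trudi
formula. Its starting point is the sequence of moments `∑ b ^ i / ∏ (b - b')` of the Lagrange
weights of `B₁ ++ B₂`, where `b` runs over `B₁` for `0 ≤ i` and, with the opposite sign, over `B₂`
for `i < 0`; every `f ∈ F` then acts on it by the Christoffel transform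
`t ↦ (i ↦ t (i + 1) - f * t i)`.

Since the Christoffel transform at `b` cancels the factor `b' - b` of every denominator, removing
`b` from `B₁` is one more Christoffel transform of the sequence, as is adding `f` to `F₁`. The four
identities are thus two three-term Plücker relations between the Hankel determinants of a sequence
and those of its Christoffel transform.
-/

section Parity

theorem neg_one_pow_eq_of_cast_eq {x y : ℕ} (h : (x : ZMod 2) = y) : (-1 : ℂ) ^ x = (-1) ^ y :=
  neg_one_pow_congr (by
    rw [← ZMod.natCast_eq_zero_iff_even, ← ZMod.natCast_eq_zero_iff_even, h])

theorem neg_one_pow_mul_eq_of_cast_eq {x y : ℂ} {s t u v : ℕ}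
    (h : (-1) ^ u * x = (-1) ^ v * y) (hsign : ((s + v : ℕ) : ZMod 2) = (t + u : ℕ)) :
    (-1) ^ s * x = (-1) ^ t * y := by
  have hs := neg_one_pow_eq_of_cast_eq hsign
  rw [pow_add, pow_add] at hs
  have hu : ((-1 : ℂ) ^ u) ≠ 0 := by simp
  refine mul_left_cancel₀ hu ?_
  linear_combination (-1) ^ s * h + y * hs

theorem neg_one_zpow_eq_of_cast_eq {x : ℤ} {y : ℕ} (h : (x : ZMod 2) = y) :
    (-1 : ℂ) ^ x = (-1) ^ y := by
  have h' : (x : ZMod 2) = (y : ℤ) := by rw [h, Int.cast_natCast]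
  obtain ⟨k, hk⟩ := (ZMod.intCast_eq_intCast_iff_dvd_sub _ _ 2).1 h'
  rw [show x = y + 2 * (-k) by push_cast at hk; omega, zpow_add₀ (by norm_num), zpow_mul]
  simp

theorem choose_two_add (x y : ℕ) : (x + y).choose 2 = x.choose 2 + y.choose 2 + x * y := by
  induction y with
  | zero => simp
  | succ y ih =>
    rw [← add_assoc, Nat.choose_succ_succ', Nat.choose_succ_succ' y, ih, Nat.choose_one_right,
      Nat.choose_one_right]
    ring

theorem int_mul_sub_one_div_two (n : ℕ) : (n : ℤ) * (n - 1) / 2 = n.choose 2 := by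
  cases n with
  | zero => rfl
  | succ n => rw [Nat.choose_two_right]; push_cast; simp

end Parity

section ListDet
variable {α β γ : Type*}

theorem listDet_of_length_eq {n : ℕ} {rows : List α} {cols : List β} (hr : rows.length = n)
    (hc : cols.length = n) (e : α → β → ℂ) :
    listDet rows cols e = Matrix.det (Matrix.of fun i j : Fin n => e rows[i] cols[j]) := by
  subst hr
  rw [listDet, dif_pos hc.symm]
  rfl

theorem listDet_of_length_ne {rows : List α} {cols : List β} (h : rows.length ≠ cols.length)
    (e : α → β → ℂ) : listDet rows cols e = 0 :=
  dif_neg h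

theorem listDet_congr {rows : List α} {cols : List β} {e e' : α → β → ℂ}
    (h : ∀ r ∈ rows, ∀ c ∈ cols, e r c = e' r c) : listDet rows cols e = listDet rows cols e' := by
  by_cases hl : rows.length = cols.length
  · rw [listDet_of_length_eq rfl hl.symm, listDet_of_length_eq rfl hl.symm]
    congr 2
    ext i j
    exact h _ (List.getElem_mem _) _ (List.getElem_mem _)
  · rw [listDet_of_length_ne hl, listDet_of_length_ne hl]

theorem listDet_transpose (rows : List α) (cols : List β) (e : α → β → ℂ) :
    listDet rows cols e = listDet cols rows (fun c r => e r c) := by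
  by_cases hl : rows.length = cols.length
  · rw [listDet_of_length_eq (n := rows.length) rfl hl.symm,
      listDet_of_length_eq (n := rows.length) hl.symm rfl, ← Matrix.det_transpose]
    rfl
  · rw [listDet_of_length_ne hl, listDet_of_length_ne (Ne.symm hl)]

theorem listDet_map_left {α' : Type*} (rows : List α') (cols : List β) (g : α' → α)
    (e : α → β → ℂ) :
    listDet (rows.map g) cols e = listDet rows cols (fun r c => e (g r) c) := by
  by_cases hl : rows.length = cols.length
  · rw [listDet_of_length_eq (n := rows.length) (by simp) hl.symm,
      listDet_of_length_eq rfl hl.symm]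
    simp
  · rw [listDet_of_length_ne hl, listDet_of_length_ne (by simpa using hl)]

theorem listDet_map_right {β' : Type*} (rows : List α) (cols : List β') (g : β' → β)
    (e : α → β → ℂ) :
    listDet rows (cols.map g) e = listDet rows cols (fun r c => e r (g c)) := by
  rw [listDet_transpose, listDet_map_left, listDet_transpose]

theorem listDet_mul {rows : List α} {ks : List γ} {cols : List β}
    (h1 : rows.length = ks.length) (h2 : ks.length = cols.length)
    (A : α → γ → ℂ) (B : γ → β → ℂ) :
    listDet rows ks A * listDet ks cols B =
      listDet rows cols (fun r c => (ks.map (fun k => A r k * B k c)).sum) := by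
  rw [listDet_of_length_eq (n := ks.length) h1 rfl, listDet_of_length_eq rfl h2.symm,
    listDet_of_length_eq (n := ks.length) h1 h2.symm, ← Matrix.det_mul]
  congr 1
  ext i j
  simp [Matrix.mul_apply, ← Fin.sum_univ_fun_getElem]

theorem listDet_scale (rows : List α) (cols : List β) (u : α → ℂ) (v : β → ℂ) (e : α → β → ℂ) :
    listDet rows cols (fun r c => u r * v c * e r c) =
      (rows.map u).prod * (cols.map v).prod * listDet rows cols e := by
  by_cases hl : rows.length = cols.length
  · have hv : (cols.map v).prod = ∏ j : Fin rows.length, v cols[j] := by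
      rw [← Fin.prod_univ_fun_getElem]
      exact (Fin.prod_congr' (fun i : Fin cols.length => v cols[i]) hl).symm
    rw [listDet_of_length_eq rfl hl.symm, listDet_of_length_eq rfl hl.symm, hv,
      ← Fin.prod_univ_fun_getElem rows u, mul_assoc, ← Matrix.det_mul_row,
      ← Matrix.det_mul_column]
    congr 1
    ext i j
    simp [mul_assoc]
  · rw [listDet_of_length_ne hl, listDet_of_length_ne hl, mul_zero]

theorem listDet_append_of_lower {r₁ r₂ : List α} {c₁ c₂ : List β} (h₁ : r₁.length = c₁.length)
    {e : α → β → ℂ} (h : ∀ r ∈ r₁, ∀ c ∈ c₂, e r c = 0) :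
    listDet (r₁ ++ r₂) (c₁ ++ c₂) e = listDet r₁ c₁ e * listDet r₂ c₂ e := by
  by_cases h₂ : r₂.length = c₂.length
  · rw [listDet_of_length_eq (n := r₁.length + r₂.length) (by simp) (by simp [h₁, h₂]),
      listDet_of_length_eq (n := r₁.length) rfl h₁.symm,
      listDet_of_length_eq (n := r₂.length) rfl h₂.symm, ← Matrix.det_fromBlocks_zero₁₂ _
        (Matrix.of fun i j => e r₂[i] c₁[j]) _, ← Matrix.det_submatrix_equiv_self finSumFinEquiv]
    congr 1
    ext i j
    rcases i with i | i <;> rcases j with j | j <;>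
      simp only [Matrix.submatrix_apply, Matrix.of_apply, Matrix.fromBlocks_apply₁₁,
        Matrix.fromBlocks_apply₁₂, Matrix.fromBlocks_apply₂₁, Matrix.fromBlocks_apply₂₂,
        Matrix.zero_apply, finSumFinEquiv_apply_left, finSumFinEquiv_apply_right,
        Fin.getElem_fin, Fin.val_castAdd, Fin.val_natAdd] <;>
      grind
  · rw [listDet_of_length_ne (by simpa [h₁] using h₂), listDet_of_length_ne h₂, mul_zero]

theorem listDet_append_of_upper {r₁ r₂ : List α} {c₁ c₂ : List β} (h₁ : r₁.length = c₁.length)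
    {e : α → β → ℂ} (h : ∀ r ∈ r₂, ∀ c ∈ c₁, e r c = 0) :
    listDet (r₁ ++ r₂) (c₁ ++ c₂) e = listDet r₁ c₁ e * listDet r₂ c₂ e := by
  rw [listDet_transpose, listDet_append_of_lower h₁.symm fun r hr c hc => h c hc r hr,
    listDet_transpose r₁, listDet_transpose r₂]

theorem listDet_swap_adjacent (rows : List α) (c₁ c₂ : List β) (x y : β) (e : α → β → ℂ) :
    listDet rows (c₁ ++ x :: y :: c₂) e = - listDet rows (c₁ ++ y :: x :: c₂) e := by
  by_cases hl : rows.length = c₁.length + (c₂.length + 2)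
  · let k : Fin rows.length := ⟨c₁.length, by omega⟩
    let l : Fin rows.length := ⟨c₁.length + 1, by omega⟩
    have hkl : k ≠ l := by simp [k, l]
    rw [listDet_of_length_eq rfl (by simp [hl]), listDet_of_length_eq rfl (by simp [hl])]
    have hsign := Matrix.det_permute' (Equiv.swap k l) (Matrix.of fun i j : Fin rows.length =>
        e rows[i] ((c₁ ++ y :: x :: c₂)[j]'(by simp; omega)))
    rw [Equiv.Perm.sign_swap hkl, Units.val_neg, Units.val_one, Int.cast_neg, Int.cast_one,
      neg_one_mul] at hsign
    rw [← hsign]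
    congr 2
    ext i j
    simp only [id, Matrix.of_apply]
    congr 1
    simp only [Fin.getElem_fin, Equiv.swap_apply_def]
    grind
  · rw [listDet_of_length_ne (by simpa using hl), listDet_of_length_ne (by simpa using hl),
      neg_zero]

theorem listDet_move (rows : List α) (c₁ c₂ c₃ : List β) (x : β) (e : α → β → ℂ) :
    listDet rows (c₁ ++ x :: (c₂ ++ c₃)) e =
      (-1) ^ c₂.length * listDet rows (c₁ ++ (c₂ ++ x :: c₃)) e := by
  induction c₂ generalizing c₁ with
  | nil => simp
  | cons y c₂ ih =>
    have := ih (c₁ ++ [y])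
    simp only [List.append_assoc, List.cons_append, List.nil_append] at this
    rw [List.cons_append, listDet_swap_adjacent, this]
    simp [pow_succ]

theorem listDet_swap_blocks (rows : List α) (c₁ c₂ c₃ c₄ : List β) (e : α → β → ℂ) :
    listDet rows (c₁ ++ (c₂ ++ (c₃ ++ c₄))) e =
      (-1) ^ (c₂.length * c₃.length) * listDet rows (c₁ ++ (c₃ ++ (c₂ ++ c₄))) e := by
  induction c₂ generalizing c₁ with
  | nil => simp
  | cons x c₂ ih =>
    have := ih (c₁ ++ [x])
    simp only [List.append_assoc, List.cons_append, List.nil_append] at this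
    rw [List.cons_append, this, listDet_move]
    simp [← mul_assoc, ← pow_add, Nat.succ_mul]

end ListDet

/-- The list `a, a + 1, …, a + n - 1` of `n` consecutive integers: `seg` with the length as
parameter. -/
def consec (a : ℤ) (n : ℕ) : List ℤ := (List.range n).map (fun k : ℕ => a + k)

theorem seg_eq_consec (a b : ℤ) : seg a b = consec a (b - a + 1).toNat := by
  -- In `seg`, `List.range _` is coerced to `List ℤ` by the monadic lift.
  simp only [seg, consec, List.pure_def, List.bind_eq_flatMap]
  rw [← List.map_eq_flatMap, List.map_map]
  rfl

theorem seg_of_length {a b : ℤ} {n : ℕ} (h : (b - a + 1).toNat = n) : seg a b = consec a n := by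
  rw [seg_eq_consec, h]

@[simp] theorem length_consec (a : ℤ) (n : ℕ) : (consec a n).length = n := by simp [consec]

@[simp] theorem consec_zero (a : ℤ) : consec a 0 = [] := rfl

@[simp] theorem getElem_consec (a : ℤ) (n i : ℕ) (h : i < (consec a n).length) :
    (consec a n)[i] = a + i := by
  simp [consec]

theorem mem_consec {a : ℤ} {n : ℕ} {x : ℤ} : x ∈ consec a n ↔ a ≤ x ∧ x < a + n := by
  simp only [consec, List.mem_map, List.mem_range]
  exact ⟨by rintro ⟨k, hk, rfl⟩; omega, fun h => ⟨(x - a).toNat, by omega, by omega⟩⟩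

theorem nodup_consec (a : ℤ) (n : ℕ) : (consec a n).Nodup :=
  List.nodup_range.map fun _ _ h => by simpa using h

theorem consec_append (a : ℤ) (n k : ℕ) : consec a n ++ consec (a + n) k = consec a (n + k) := by
  simp only [consec, List.range_add, List.map_append, List.map_map]
  congr 1
  exact List.map_congr_left fun x _ => by simp [add_assoc]

theorem consec_succ (a : ℤ) (n : ℕ) : consec a (n + 1) = a :: consec (a + 1) n := by
  rw [Nat.add_comm, ← consec_append a 1 n]
  simp [consec]

theorem consec_succ' (a : ℤ) (n : ℕ) : consec a (n + 1) = consec a n ++ [a + n] := by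
  rw [← consec_append a n 1]
  simp [consec]

theorem consec_add (a c : ℤ) (n : ℕ) : consec (a + c) n = (consec a n).map (· + c) := by
  simp only [consec, List.map_map]
  exact List.map_congr_left fun x _ => by simp [add_right_comm]

theorem listDet_antitriangular (n : ℕ) (a b : ℤ) (e : ℤ → ℤ → ℂ)
    (h0 : ∀ i ∈ consec a n, ∀ j ∈ consec b n, i + j < a + b + n - 1 → e i j = 0)
    (h1 : ∀ i ∈ consec a n, ∀ j ∈ consec b n, i + j = a + b + n - 1 → e i j = 1) :
    listDet (consec a n) (consec b n) e = (-1) ^ n.choose 2 := by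
  induction n generalizing a with
  | zero => simp [listDet_of_length_eq (n := 0)]
  | succ n ih =>
    simp only [mem_consec] at h0 h1 ih
    have hcorner : listDet [a] [b + (n : ℤ)] e = 1 := by
      rw [listDet_of_length_eq (n := 1) rfl rfl]
      simpa using h1 a (by omega) (b + n) (by omega) (by omega)
    have hmove := listDet_move (consec a (n + 1)) [] (consec b n) [] (b + n) e
    simp only [List.nil_append, List.append_nil, length_consec] at hmove
    have hblock := listDet_append_of_lower (r₁ := [a]) (r₂ := consec (a + 1) n)
      (c₁ := [b + (n : ℤ)]) (c₂ := consec b n) (e := e) rfl fun r hr c hc => by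
        rw [List.mem_singleton] at hr
        rw [mem_consec] at hc
        exact h0 r (by omega) c (by omega) (by omega)
    rw [List.singleton_append, List.singleton_append, ← consec_succ, hmove, hcorner, one_mul,
      ih (a + 1) (fun i hi j hj h => h0 i (by omega) j (by omega) (by omega))
        (fun i hi j hj h => h1 i (by omega) j (by omega) (by omega))] at hblock
    rw [consec_succ' b, Nat.choose_succ_succ' n 1, Nat.choose_one_right, pow_add, ← hblock,
      ← mul_assoc, ← mul_pow]
    simp

theorem listDet_unitriangular (n : ℕ) (a b : ℤ) (e : ℤ → ℤ → ℂ)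
    (h0 : ∀ i ∈ consec a n, ∀ j ∈ consec b n, j - b < i - a → e i j = 0)
    (h1 : ∀ i ∈ consec a n, ∀ j ∈ consec b n, j - b = i - a → e i j = 1) :
    listDet (consec a n) (consec b n) e = 1 := by
  simp only [mem_consec] at h0 h1
  rw [listDet_of_length_eq (n := n) (by simp) (by simp), Matrix.det_of_isUpperTriangular]
  · exact Finset.prod_eq_one fun i _ => by
      simpa using h1 (a + i) (by omega) (b + i) (by omega) (by omega)
  · intro i j hij
    have hij : (j : ℕ) < i := hij
    simpa using h0 (a + i) (by omega) (b + j) (by omega) (by omega)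

section Weights
variable {X : List ℂ} {x : ℂ}

/-- The barycentric weight `∏ (x - y)⁻¹` of a node `x ∈ X`, the product running over the other
nodes `y`. -/
noncomputable def weight (X : List ℂ) (x : ℂ) : ℂ := Lagrange.nodalWeight X.toFinset id x

/-- The value at `x` of the monic polynomial with root list `X`. -/
noncomputable def nodal (X : List ℂ) (x : ℂ) : ℂ := (X.map (x - ·)).prod

/-- The weighted power sum `∑ x ^ i * weight X x`, which is the complete homogeneous symmetric
function `h_{i + 1 - |X|}`; the value at `i = -1` for the empty list is `h_0 = 1`. -/
noncomputable def powerMoment (X : List ℂ) (i : ℤ) : ℂ :=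
  if 0 ≤ i then (X.map (fun x => x ^ i * weight X x)).sum
  else if i = -1 ∧ X = [] then 1 else 0

/-- The determinant with the entry `x ^ i` in row `x ∈ X` and column `0 ≤ i < |X|`. -/
noncomputable def vandermonde (X : List ℂ) : ℂ :=
  listDet X (consec 0 X.length) (fun x i => x ^ i)

theorem powerMoment_of_nonneg {i : ℤ} (h : 0 ≤ i) :
    powerMoment X i = (X.map (fun x => x ^ i * weight X x)).sum := if_pos h

theorem powerMoment_natCast (hX : X.Nodup) {i : ℕ} (h : i < X.length) :
    powerMoment X i = if X.length - 1 = i then 1 else 0 := by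
  have hcard : X.toFinset.card = X.length := List.toFinset_card_of_nodup hX
  have hcoeff := Lagrange.coeff_eq_sum (s := X.toFinset) (v := id) (Set.injOn_id _)
    (P := (Polynomial.X : Polynomial ℂ) ^ i) (by
      rw [Polynomial.degree_X_pow, hcard]; exact_mod_cast h)
  rw [Polynomial.coeff_X_pow, hcard] at hcoeff
  rw [powerMoment_of_nonneg (by omega), ← List.sum_toFinset _ hX, hcoeff]
  exact Finset.sum_congr rfl fun x _ => by simp [weight, Lagrange.nodalWeight, div_eq_mul_inv]

theorem powerMoment_eq_zero (hX : X.Nodup) {i : ℤ} (h : i < X.length - 1) :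
    powerMoment X i = 0 := by
  by_cases hi : 0 ≤ i
  · lift i to ℕ using hi
    rw [powerMoment_natCast hX (by omega), if_neg (by omega)]
  · rw [powerMoment, if_neg hi, if_neg]
    rintro ⟨rfl, rfl⟩
    simp at h

theorem powerMoment_eq_one (hX : X.Nodup) {i : ℤ} (h : i = X.length - 1) :
    powerMoment X i = 1 := by
  by_cases hi : 0 ≤ i
  · lift i to ℕ using hi
    rw [powerMoment_natCast hX (by omega), if_pos (by omega)]
  · rw [powerMoment, if_neg hi, if_pos ⟨by omega, List.length_eq_zero_iff.1 (by omega)⟩]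

theorem nodal_ne_zero (h : x ∉ X) : nodal X x ≠ 0 := by
  simp only [nodal, ne_eq, List.prod_eq_zero_iff, List.mem_map, not_exists, not_and]
  exact fun y hy hxy => h (sub_eq_zero.1 hxy ▸ hy)

theorem weight_cons_self (hX : (x :: X).Nodup) : weight (x :: X) x = (nodal X x)⁻¹ := by
  rw [List.nodup_cons] at hX
  have hx : x ∉ X.toFinset := by simpa using hX.1
  simp [weight, Lagrange.nodalWeight, Finset.erase_insert hx, nodal,
    List.prod_toFinset _ hX.2, List.prod_inv, Function.comp_def]

theorem weight_cons_of_mem {y : ℂ} (hX : (x :: X).Nodup) (hy : y ∈ X) :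
    weight (x :: X) y = weight X y / (y - x) := by
  rw [List.nodup_cons] at hX
  have hxy : x ≠ y := by rintro rfl; exact hX.1 hy
  rw [weight, weight, Lagrange.nodalWeight, Lagrange.nodalWeight, List.toFinset_cons,
    Finset.erase_insert_of_ne hxy, Finset.prod_insert (by simpa using fun _ => hX.1)]
  simp [div_eq_inv_mul]

theorem powerMoment_cons (hX : (x :: X).Nodup) (i : ℤ) :
    powerMoment (x :: X) (i + 1) = powerMoment X i + x * powerMoment (x :: X) i := by
  have hlen : ((x :: X).length : ℤ) = X.length + 1 := by simp
  have hX' := (List.nodup_cons.1 hX).2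
  rcases lt_or_ge i 0 with hi | hi
  · rw [powerMoment_eq_zero (i := i) hX (by omega), mul_zero, add_zero]
    rcases lt_or_ge i (X.length - 1) with h | h
    · rw [powerMoment_eq_zero hX' h, powerMoment_eq_zero hX (by omega)]
    · rw [powerMoment_eq_one hX' (by omega), powerMoment_eq_one hX (by omega)]
  · have hterm : ∀ y ∈ X, y ^ (i + 1) * weight (x :: X) y =
        y ^ i * weight X y + x * (y ^ i * weight (x :: X) y) := by
      intro y hy
      have hyx : y - x ≠ 0 := sub_ne_zero.2 fun h => (List.nodup_cons.1 hX).1 (h ▸ hy)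
      rw [weight_cons_of_mem hX hy, zpow_add' (by omega), zpow_one]
      field_simp
      ring
    rw [powerMoment_of_nonneg hi, powerMoment_of_nonneg hi, powerMoment_of_nonneg (by omega),
      List.map_cons, List.map_cons, List.sum_cons, List.sum_cons, List.map_congr_left hterm,
      List.sum_map_add, List.sum_map_mul_left, zpow_add' (by omega), zpow_one]
    ring

theorem sum_pow_mul_weight_div_sub (hX : (x :: X).Nodup) {i : ℤ} (hi : 0 ≤ i) (g : ℕ) :
    (X.map (fun y => y ^ i * weight X y / (x - y))).sum +
        ((consec 1 g).map (fun j => powerMoment X (i - j) * x ^ (j - 1))).sum =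
      x ^ i / nodal X x - x ^ g * powerMoment (x :: X) (i - g) := by
  induction g with
  | zero =>
    have hterm : ∀ y ∈ X, y ^ i * weight X y / (x - y) =
        -1 * (y ^ i * weight (x :: X) y) := by
      intro y hy
      rw [weight_cons_of_mem hX hy, ← neg_sub x y, div_neg]
      ring
    simp only [List.map_congr_left hterm, List.sum_map_mul_left, consec_zero, List.map_nil,
      List.sum_nil, Nat.cast_zero, sub_zero, pow_zero, powerMoment_of_nonneg hi, List.map_cons,
      List.sum_cons, weight_cons_self hX]
    ring
  | succ g ih =>
    rw [consec_succ', List.map_append, List.sum_append, ← add_assoc, ih]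
    have := powerMoment_cons hX (i - (1 + g))
    rw [show i - (1 + (g : ℤ)) + 1 = i - g by ring] at this
    rw [this]
    simp only [List.map_cons, List.map_nil, List.sum_singleton, Nat.cast_add, Nat.cast_one,
      add_comm (g : ℤ) 1, add_sub_cancel_left, zpow_natCast, pow_succ]
    ring

theorem pow_div_nodal (hX : (x :: X).Nodup) {g : ℕ} {i : ℤ} (hi : 0 ≤ i) (hg : i < X.length + g) :
    (X.map (fun y => y ^ i * weight X y / (x - y))).sum +
      ((consec 1 g).map (fun j => powerMoment X (i - j) * x ^ (j - 1))).sum =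
      x ^ i / nodal X x := by
  rw [sum_pow_mul_weight_div_sub hX hi, powerMoment_eq_zero hX (by simp; omega), mul_zero,
    sub_zero]

theorem listDet_pow_mul_weight (X : List ℂ) :
    listDet (consec 0 X.length) X (fun i x => x ^ i * weight X x) =
      (X.map (weight X)).prod * vandermonde X := by
  have := listDet_scale (consec 0 X.length) X (fun _ => 1) (weight X) (fun i x => x ^ i)
  simp only [one_mul, List.map_const', List.prod_replicate, one_pow] at this
  rw [vandermonde, listDet_transpose X, ← this]
  exact listDet_congr fun _ _ _ _ => mul_comm _ _

theorem prod_weight_mul_vandermonde_sq (hX : X.Nodup) :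
    (X.map (weight X)).prod * vandermonde X ^ 2 = (-1) ^ X.length.choose 2 := by
  rw [pow_two, ← mul_assoc, ← listDet_pow_mul_weight, vandermonde,
    listDet_mul (by simp) (by simp)]
  have hmoment : ∀ i ∈ consec 0 X.length, ∀ j ∈ consec 0 X.length,
      (X.map (fun x => x ^ i * weight X x * x ^ j)).sum = powerMoment X (i + j) := by
    intro i hi j hj
    rw [mem_consec] at hi hj
    rw [powerMoment_of_nonneg (by omega)]
    congr 1
    refine List.map_congr_left fun x _ => ?_
    rw [zpow_add' (by omega)]
    ring
  rw [listDet_congr hmoment]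
  exact listDet_antitriangular _ _ _ _ (fun i _ j _ h => powerMoment_eq_zero hX (by omega))
    fun i _ j _ h => powerMoment_eq_one hX (by omega)

theorem weight_ne_zero (hX : X.Nodup) (hx : x ∈ X) : weight X x ≠ 0 := by
  have h := prod_weight_mul_vandermonde_sq hX
  intro h0
  rw [List.prod_eq_zero (List.mem_map.2 ⟨x, hx, h0⟩)] at h
  simpa using h.symm

theorem vandermonde_ne_zero (hX : X.Nodup) : vandermonde X ≠ 0 := by
  intro h
  simpa [h] using (prod_weight_mul_vandermonde_sq hX).symm

theorem vandermonde_eq_prod (X : List ℂ) : vandermonde X = pairProd X (fun x y => y - x) := by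
  rw [vandermonde, pairProd, listDet_of_length_eq (n := X.length) rfl (by simp)]
  simp only [Fin.getElem_fin, getElem_consec, zero_add, zpow_natCast]
  refine (Matrix.det_vandermonde _).trans (Finset.prod_congr rfl fun i _ => ?_)
  rw [← Finset.prod_filter]
  exact Finset.prod_congr (by ext; simp) fun _ _ => rfl

theorem pairProd_neg {ι : Type*} (L : List ι) (g : ι → ι → ℂ) :
    pairProd L (fun x y => - g x y) = (-1) ^ L.length.choose 2 * pairProd L g := by
  have hsign : ∏ i : Fin L.length, ∏ j : Fin L.length, (if i < j then (-1 : ℂ) else 1) =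
      (-1) ^ L.length.choose 2 := by
    simp_rw [← Finset.prod_filter, Finset.filter_lt_eq_Ioi, Finset.prod_const, Fin.card_Ioi]
    rw [Finset.prod_pow_eq_pow_sum, Fin.sum_univ_eq_sum_range (fun i => L.length - 1 - i),
      Finset.sum_range_reflect (fun i => i), Finset.sum_range_id, Nat.choose_two_right]
  rw [pairProd, pairProd, ← hsign, ← Finset.prod_mul_distrib]
  refine Finset.prod_congr rfl fun i _ => ?_
  rw [← Finset.prod_mul_distrib]
  exact Finset.prod_congr rfl fun j _ => by split_ifs <;> simp

theorem Dden_id (B F : List ℂ) :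
    Dden id B F =
      (-1) ^ B.length.choose 2 * vandermonde B * vandermonde F / (B.map (nodal F)).prod := by
  rw [Dden, vandermonde_eq_prod, vandermonde_eq_prod, ← pairProd_neg]
  simp only [id, neg_sub, prodLL]
  rfl

theorem div_Dden_id {B F : List ℂ} (hB : B.Nodup) (hF : F.Nodup) {s x y : ℂ}
    (h : (B.map (nodal F)).prod * x = s * (vandermonde B * vandermonde F * y)) :
    x / Dden id B F = s * (-1) ^ B.length.choose 2 * y := by
  have hVB := vandermonde_ne_zero hB
  have hVF := vandermonde_ne_zero hF
  have hsign : ((-1 : ℂ) ^ B.length.choose 2) ^ 2 = 1 := by rw [← pow_mul, mul_comm, pow_mul]; simp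
  rw [Dden_id, div_div_eq_mul_div, div_eq_iff (by simp [hVB, hVF]), mul_comm x, h]
  linear_combination -(s * vandermonde B * vandermonde F * y) * hsign

end Weights

section VecDet
variable {α κ : Type*}

/-- The determinant whose rows are the functions in `vs`, restricted to the columns `ks`. -/
noncomputable def vecDet (vs : List (κ → ℂ)) (ks : List κ) : ℂ := listDet vs ks (fun v k => v k)

theorem listDet_eq_vecDet (rows : List α) (cols : List κ) (e : α → κ → ℂ) :
    listDet rows cols e = vecDet (rows.map e) cols :=
  (listDet_map_left rows cols e fun v k => v k).symm

theorem vecDet_map_eval (vs : List (κ → ℂ)) (ks : List κ) :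
    vecDet (ks.map Function.eval) vs = vecDet vs ks := by
  rw [← listDet_eq_vecDet, listDet_transpose]
  rfl

theorem vecDet_map_keys {κ' : Type*} (vs : List (κ → ℂ)) (ks : List κ') (g : κ' → κ) :
    vecDet vs (ks.map g) = vecDet (vs.map (· ∘ g)) ks :=
  (listDet_map_right _ _ _ _).trans (listDet_map_left vs ks (· ∘ g) fun v k => v k).symm

theorem vecDet_of_length_ne {vs : List (κ → ℂ)} {ks : List κ} (h : vs.length ≠ ks.length) :
    vecDet vs ks = 0 := listDet_of_length_ne h _

theorem vecDet_swap_keys (vs : List (κ → ℂ)) (k₁ k₂ k₃ k₄ : List κ) :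
    vecDet vs (k₁ ++ (k₂ ++ (k₃ ++ k₄))) =
      (-1) ^ (k₂.length * k₃.length) * vecDet vs (k₁ ++ (k₃ ++ (k₂ ++ k₄))) :=
  listDet_swap_blocks _ _ _ _ _ _

theorem vecDet_swap (v₁ v₂ v₃ v₄ : List (κ → ℂ)) (ks : List κ) :
    vecDet (v₁ ++ (v₂ ++ (v₃ ++ v₄))) ks =
      (-1) ^ (v₂.length * v₃.length) * vecDet (v₁ ++ (v₃ ++ (v₂ ++ v₄))) ks := by
  rw [← vecDet_map_eval, vecDet_swap_keys, vecDet_map_eval]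

theorem vecDet_map_mul (rows : List α) (c : α → ℂ) (w : α → κ → ℂ) (ks : List κ) :
    vecDet (rows.map fun r k => c r * w r k) ks = (rows.map c).prod * vecDet (rows.map w) ks := by
  simpa [← listDet_eq_vecDet] using listDet_scale rows ks c (fun _ => 1) w

theorem vecDet_append_of_forall_eq_zero {vs₁ vs₂ : List (κ → ℂ)} {ks₁ ks₂ : List κ}
    (hlen : vs₁.length = ks₁.length) (h : ∀ v ∈ vs₂, ∀ k ∈ ks₁, v k = 0) :
    vecDet (vs₁ ++ vs₂) (ks₁ ++ ks₂) = vecDet vs₁ ks₁ * vecDet vs₂ ks₂ :=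
  listDet_append_of_upper hlen h

theorem listDet_mul_vecDet {rows : List α} {γ : Type*} {js : List γ}
    (hlen : rows.length = js.length) (A : α → γ → ℂ) (w : γ → κ → ℂ) (Y : List (κ → ℂ))
    (ks : List κ) :
    listDet rows js A * vecDet (js.map w ++ Y) ks =
      vecDet (rows.map (fun r k => (js.map (fun j => A r j * w j k)).sum) ++ Y) ks := by
  obtain ⟨n, y, rfl⟩ : ∃ (n : ℕ) (y : Fin n → κ → ℂ), Y = (List.finRange n).map y :=
    ⟨_, Y.get, (List.map_get_finRange Y).symm⟩
  by_cases hks : js.length + n = ks.length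
  swap
  · rw [vecDet_of_length_ne (by simpa using hks), vecDet_of_length_ne (by simpa [hlen] using hks),
      mul_zero]
  let A' : α ⊕ Fin n → γ ⊕ Fin n → ℂ
    | .inl r, .inl j => A r j
    | .inr i, .inr i' => if i = i' then 1 else 0
    | _, _ => 0
  let w' : γ ⊕ Fin n → κ → ℂ := Sum.elim w y
  have hw' : js.map w ++ (List.finRange n).map y =
      (js.map Sum.inl ++ (List.finRange n).map Sum.inr).map w' := by
    simp [w', Function.comp_def]
  have hA' : listDet (rows.map Sum.inl ++ (List.finRange n).map Sum.inr)
      (js.map Sum.inl ++ (List.finRange n).map Sum.inr) A' = listDet rows js A := by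
    have hone : (Matrix.of fun i j : Fin n => if i = j then (1 : ℂ) else 0) = 1 :=
      Matrix.ext fun i j => Matrix.one_apply.symm
    rw [listDet_append_of_lower (by simp [hlen]) (by simp [A']), listDet_map_left,
      listDet_map_right, listDet_map_left, listDet_map_right,
      listDet_of_length_eq (rows := List.finRange n) (n := n) (by simp) (by simp)]
    simp [A', hone]
  rw [hw', ← hA', ← listDet_eq_vecDet, listDet_mul (by simp [hlen]) (by simp [hks]),
    listDet_eq_vecDet, List.map_append, List.map_map, List.map_map]
  congr 2
  · refine List.map_congr_left fun r _ => funext fun k => ?_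
    simp [A', w', Function.comp_def]
  · refine List.map_congr_left fun i _ => funext fun k => ?_
    simp [A', w', Function.comp_def, ← Fin.sum_univ_def]

end VecDet

section MomentReduction
variable {κ : Type*}

/-- The `l`-th moment of a family `u` of functions indexed by the nodes `X`, corrected by the
combination of the functions `v 1, …, v g` which occurs in `pow_div_nodal`. -/
noncomputable def moment (X : List ℂ) (u : ℂ → κ → ℂ) (g : ℕ) (v : ℤ → κ → ℂ) (l : ℤ) (k : κ) : ℂ :=
  (X.map (fun x => x ^ l * weight X x * u x k)).sum +
    ((consec 1 g).map (fun j => powerMoment X (l - j) * v j k)).sum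

/-- The coefficient of row `k` in the `l`-th moment. -/
noncomputable def momentCoeff (X : List ℂ) (l : ℤ) : ℂ ⊕ ℤ → ℂ
  | .inl x => x ^ l * weight X x
  | .inr j => powerMoment X (l - j)

theorem listDet_momentCoeff {X : List ℂ} (hX : X.Nodup) (g : ℕ) :
    listDet (consec 0 (X.length + g)) (X.map Sum.inl ++ (consec 1 g).map Sum.inr)
      (momentCoeff X) * vandermonde X = (-1) ^ X.length.choose 2 := by
  have hgap : listDet (consec X.length g) (consec 1 g) (fun l j => powerMoment X (l - j)) = 1 := by
    rw [listDet_transpose]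
    exact listDet_unitriangular _ _ _ _ (fun i _ j _ h => powerMoment_eq_zero hX (by omega))
      fun i _ j _ h => powerMoment_eq_one hX (by omega)
  have hpow : listDet (consec 0 X.length) (X.map Sum.inl) (momentCoeff X) =
      (X.map (weight X)).prod * vandermonde X := by
    rw [← listDet_pow_mul_weight, listDet_map_right]
    rfl
  have hgap' : listDet (consec X.length g) ((consec 1 g).map Sum.inr) (momentCoeff X) = 1 := by
    rw [← hgap, listDet_map_right]
    rfl
  have hzero : ∀ l ∈ consec 0 X.length, ∀ k ∈ (consec 1 g).map (Sum.inr : ℤ → ℂ ⊕ ℤ),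
      momentCoeff X l k = 0 := by
    simp only [mem_consec, List.mem_map]
    rintro l hl _ ⟨j, hj, rfl⟩
    exact powerMoment_eq_zero hX (by omega)
  rw [← consec_append, zero_add, listDet_append_of_lower (by simp) hzero, hpow, hgap', mul_one,
    mul_assoc, ← pow_two, prod_weight_mul_vandermonde_sq hX]

theorem vecDet_moment {X : List ℂ} (hX : X.Nodup) {a d g : ℕ} (hlen : X.length + g = a + d)
    (hdg : d = 0 ∨ g = 0) {u : ℂ → κ → ℂ} {v : ℤ → κ → ℂ} {p : ℤ → κ}
    (hu : ∀ i ∈ consec 0 d, ∀ x ∈ X, u x (p i) = x ^ i)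
    {Y : List (κ → ℂ)} (hY : ∀ i ∈ consec 0 d, ∀ y ∈ Y, y (p i) = 0) (ks : List κ) :
    vecDet ((consec 0 (a + d)).map (moment X u g v) ++ Y) ((consec 0 d).map p ++ ks) =
      (-1) ^ (d.choose 2 + a * d) * vecDet ((consec 0 a).map (moment X u g v) ++ Y) ks := by
  have hmoment : ∀ l, 0 ≤ l → ∀ i ∈ consec 0 d,
      moment X u g v l (p i) = powerMoment X (l + i) := by
    intro l hl i hi
    have hd : 0 ≤ i ∧ i < 0 + d := mem_consec.1 hi
    obtain rfl : g = 0 := by omega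
    rw [powerMoment_of_nonneg (by omega)]
    simp only [moment, consec_zero, List.map_nil, List.sum_nil, add_zero]
    congr 1
    refine List.map_congr_left fun x hx => ?_
    rw [hu i hi x hx, zpow_add' (by omega)]
    ring
  have hcorner : vecDet ((consec a d).map (moment X u g v)) ((consec 0 d).map p) =
      (-1) ^ d.choose 2 := by
    rw [← listDet_eq_vecDet, listDet_map_right]
    refine listDet_antitriangular _ _ _ _ (fun l hl i hi h => ?_) fun l hl i hi h => ?_ <;>
      have hd := (mem_consec.1 hi) <;> have ha := (mem_consec.1 hl)
    · rw [hmoment l (by omega) i hi, powerMoment_eq_zero hX (by omega)]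
    · rw [hmoment l (by omega) i hi, powerMoment_eq_one hX (by omega)]
  have hzero : ∀ y ∈ (consec 0 a).map (moment X u g v) ++ Y, ∀ k ∈ (consec 0 d).map p, y k = 0 := by
    simp only [List.mem_append, List.mem_map]
    rintro y hy _ ⟨i, hi, rfl⟩
    rcases hy with ⟨l, hl, rfl⟩ | hy
    · have hd := (mem_consec.1 hi)
      have ha := (mem_consec.1 hl)
      rw [hmoment l (by omega) i hi, powerMoment_eq_zero hX (by omega)]
    · exact hY i hi y hy
  have hswap := vecDet_swap [] ((consec 0 a).map (moment X u g v))
    ((consec a d).map (moment X u g v)) Y ((consec 0 d).map p ++ ks)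
  rw [List.nil_append, List.nil_append, ← List.append_assoc, ← List.map_append,
    vecDet_append_of_forall_eq_zero (by simp) hzero, hcorner] at hswap
  rw [← consec_append, zero_add, hswap]
  simp only [List.length_map, length_consec]
  ring

theorem vecDet_moment_reduction {X : List ℂ} (hX : X.Nodup) {a d g : ℕ}
    (hlen : X.length + g = a + d) (hdg : d = 0 ∨ g = 0) {u : ℂ → κ → ℂ} {v : ℤ → κ → ℂ} {p : ℤ → κ}
    (hu : ∀ i ∈ consec 0 d, ∀ x ∈ X, u x (p i) = x ^ i)
    {Y : List (κ → ℂ)} (hY : ∀ i ∈ consec 0 d, ∀ y ∈ Y, y (p i) = 0) (ks : List κ) :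
    vecDet (X.map u ++ ((consec 1 g).map v ++ Y)) ((consec 0 d).map p ++ ks) =
      (-1) ^ (X.length.choose 2 + d.choose 2 + a * d) * vandermonde X *
        vecDet ((consec 0 a).map (moment X u g v) ++ Y) ks := by
  have hdet := listDet_momentCoeff hX g
  have hmul := listDet_mul_vecDet (rows := consec 0 (X.length + g))
    (js := X.map Sum.inl ++ (consec 1 g).map Sum.inr) (by simp) (momentCoeff X) (Sum.elim u v) Y
    ((consec 0 d).map p ++ ks)
  have hmoment : (fun (l : ℤ) k => ((X.map Sum.inl ++ (consec 1 g).map Sum.inr).map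
      (fun j => momentCoeff X l j * Sum.elim u v j k)).sum) = moment X u g v := by
    funext l k
    simp [moment, momentCoeff, Function.comp_def]
  rw [hmoment, hlen, vecDet_moment hX hlen hdg hu hY, ← hlen] at hmul
  simp only [List.map_append, List.map_map, Function.comp_def, Sum.elim_inl, Sum.elim_inr,
    List.append_assoc] at hmul
  have hsign : ((-1 : ℂ) ^ X.length.choose 2) * (-1) ^ X.length.choose 2 = 1 := by
    rw [← mul_pow]; simp
  linear_combination ((-1) ^ X.length.choose 2 * vandermonde X) * hmul -
    (-1) ^ X.length.choose 2 *
      vecDet (X.map u ++ ((consec 1 g).map v ++ Y)) ((consec 0 d).map p ++ ks) * hdet -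
      vecDet (X.map u ++ ((consec 1 g).map v ++ Y)) ((consec 0 d).map p ++ ks) * hsign

theorem moment_of_eq_div_sub {X : List ℂ} {x y : ℂ} (hX : (x :: X).Nodup)
    {u : ℂ → κ → ℂ} {v : ℤ → κ → ℂ} {k : κ} (hu : ∀ x' ∈ X, u x' k = y / (x - x'))
    (hv : ∀ j, v j k = y * x ^ (j - 1)) {g : ℕ} {l : ℤ} (hl : 0 ≤ l) (hlg : l < X.length + g) :
    moment X u g v l k = y * (x ^ l / nodal X x) := by
  rw [moment, ← pow_div_nodal hX hl hlg, mul_add, ← List.sum_map_mul_left, ← List.sum_map_mul_left]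
  congr 2
  · refine List.map_congr_left fun x' hx' => ?_
    rw [hu x' hx']
    ring
  · refine List.map_congr_left fun j _ => ?_
    rw [hv]
    ring

end MomentReduction

section Plucker
variable {κ : Type*}

theorem vecDet_of_length_eq {n : ℕ} {vs : List (κ → ℂ)} {ks : List κ} (hv : vs.length = n)
    (hk : ks.length = n) :
    vecDet vs ks = Matrix.det (Matrix.of fun i j : Fin n => vs[i] ks[j]) :=
  listDet_of_length_eq hv hk _

theorem vecDet_swap_head (v w : κ → ℂ) (vs : List (κ → ℂ)) (ks : List κ) :
    vecDet (v :: w :: vs) ks = - vecDet (w :: v :: vs) ks := by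
  simpa using vecDet_swap [] [v] [w] vs ks

theorem vecDet_cons_eq_zero {v : κ → ℂ} {vs : List (κ → ℂ)} (hv : v ∈ vs) (ks : List κ) :
    vecDet (v :: vs) ks = 0 := by
  by_cases hlen : (v :: vs).length = ks.length
  · obtain ⟨k, hk, rfl⟩ := List.getElem_of_mem hv
    rw [vecDet_of_length_eq rfl hlen.symm]
    exact Matrix.det_zero_of_row_eq (i := 0) (j := ⟨k + 1, by simpa using hk⟩)
      (by simp [Fin.ext_iff]) (by ext j; simp; rfl)
  · exact vecDet_of_length_ne hlen

theorem cramer_transpose_eq_vecDet_set {n : ℕ} {vs : List (κ → ℂ)} {ks : List κ}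
    (hv : vs.length = n) (hk : ks.length = n) (w : κ → ℂ) (i : Fin n) :
    (Matrix.of fun i j : Fin n => vs[i] ks[j]).transpose.cramer (fun j => w ks[j]) i =
      vecDet (vs.set i w) ks := by
  rw [Matrix.cramer_transpose_apply, vecDet_of_length_eq (n := n) (by simpa using hv) hk]
  congr 1
  ext i' j
  by_cases h : i' = i
  · simp [h]
  · simp [h, List.getElem_set_ne (Fin.val_ne_of_ne (Ne.symm h))]

theorem vecDet_plucker (X : List (κ → ℂ)) (x₁ x₂ x₃ y : κ → ℂ) (ks : List κ) :
    vecDet (x₁ :: (X ++ [y])) ks * vecDet (x₂ :: x₃ :: X) ks -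
      vecDet (x₂ :: (X ++ [y])) ks * vecDet (x₁ :: x₃ :: X) ks +
      vecDet (x₃ :: (X ++ [y])) ks * vecDet (x₁ :: x₂ :: X) ks = 0 := by
  by_cases hlen : ks.length = X.length + 2
  swap
  · simp [vecDet_of_length_ne (vs := _ :: _ :: X) (Ne.symm hlen)]
  -- Cramer's rule expresses `x₁` by the rows `x₂`, `x₃` and `X`; to this relation we apply the
  -- linear form `x ↦ vecDet (x :: (X ++ [y])) ks`, which vanishes on `X`.
  have hA : (x₂ :: x₃ :: X).length = X.length + 2 := rfl
  have hC : (x₁ :: (X ++ [y])).length = X.length + 2 := by simp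
  let A := Matrix.of fun i j : Fin (X.length + 2) => (x₂ :: x₃ :: X)[i] ks[j]
  let C := Matrix.of fun i j : Fin (X.length + 2) => (x₁ :: (X ++ [y]))[i] ks[j]
  have hform (x : κ → ℂ) :
      C.transpose.cramer (fun j => x ks[j]) 0 = vecDet (x :: (X ++ [y])) ks :=
    cramer_transpose_eq_vecDet_set hC hlen x 0
  have hform₂ : C.transpose.cramer (A 0) 0 = vecDet (x₂ :: (X ++ [y])) ks := hform x₂
  have hform₃ : C.transpose.cramer (A 1) 0 = vecDet (x₃ :: (X ++ [y])) ks := hform x₃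
  have hformX (i : Fin X.length) : C.transpose.cramer (A i.succ.succ) 0 = 0 :=
    (hform X[i]).trans (vecDet_cons_eq_zero (by simp) ks)
  have hcoeff (i : Fin (X.length + 2)) : A.transpose.cramer (fun j => x₁ ks[j]) i =
      vecDet ((x₂ :: x₃ :: X).set i x₁) ks := cramer_transpose_eq_vecDet_set hA hlen x₁ i
  have hdet : A.det = vecDet (x₂ :: x₃ :: X) ks := (vecDet_of_length_eq hA hlen).symm
  have hcramer := congrFun (congrArg C.transpose.cramer
    (A.transpose.mulVec_cramer fun j => x₁ ks[j])) 0
  rw [Matrix.mulVec_eq_sum, Fin.sum_univ_succ, Fin.sum_univ_succ] at hcramer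
  simp only [Matrix.transpose_transpose, op_smul_eq_smul, map_add, map_sum, map_smul, Pi.add_apply,
    Finset.sum_apply, Pi.smul_apply, smul_eq_mul, Fin.succ_zero_eq_one, Matrix.det_transpose,
    hformX, hform₂, hform₃, hform, mul_zero, Finset.sum_const_zero, add_zero, hcoeff, hdet,
    Fin.val_zero, Fin.val_one, List.set_cons_zero, List.set_cons_succ,
    vecDet_swap_head x₂ x₁] at hcramer
  linear_combination -hcramer

end Plucker

section Hankel

/-- The Christoffel transform `T - x` of a sequence, where `T` is the shift. -/
def christoffel (x : ℂ) (t : ℤ → ℂ) (i : ℤ) : ℂ := t (i + 1) - x * t i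

/-- The Hankel determinant `det (t (c + i + j))`, `0 ≤ i, j < a`, its rows being the shifts
of `t`. -/
noncomputable def hankel (t : ℤ → ℂ) (a : ℕ) (c : ℤ) : ℂ :=
  vecDet ((consec 0 a).map fun l i => t (i + l)) (consec c a)

theorem hankel_zero (t : ℤ → ℂ) (c : ℤ) : hankel t 0 c = 1 := by
  simp [hankel, vecDet_of_length_eq (n := 0)]

theorem vecDet_shift (t : ℤ → ℂ) (a : ℕ) (c r : ℤ) :
    vecDet ((consec c a).map fun l i => t (i + l)) (consec r a) = hankel t a (c + r) := by
  rw [hankel, ← zero_add c, add_comm (0 + c), zero_add, consec_add r c, vecDet_map_keys,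
    ← zero_add c, consec_add 0 c, List.map_map, List.map_map]
  simp only [Function.comp_def, zero_add, add_assoc, add_comm c]

theorem vecDet_cons_geometric {x : ℂ} {v : ℤ → ℂ} (hv : christoffel x v = 0)
    (vs : List (ℤ → ℂ)) (c : ℤ) (n : ℕ) :
    vecDet (v :: vs) (consec c (n + 1)) =
      v c * vecDet (vs.map (christoffel x)) (consec c n) := by
  by_cases hlen : vs.length = n
  swap
  · rw [vecDet_of_length_ne (by simpa using hlen), vecDet_of_length_ne (by simpa using hlen),
      mul_zero]
  let e (w : ℤ → ℂ) (i : ℤ) : ℂ := if i = c then w c else christoffel x w (i - 1)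
  have he : vecDet (v :: vs) (consec c (n + 1)) = listDet (v :: vs) (consec c (n + 1)) e := by
    rw [vecDet_of_length_eq (n := n + 1) (by simp [hlen]) (by simp),
      listDet_of_length_eq (n := n + 1) (by simp [hlen]) (by simp)]
    refine Matrix.det_eq_of_forall_col_eq_smul_add_pred (fun _ => x) (fun i => ?_) fun i j => ?_
    · simp [e]
    · simp [e, christoffel, ← add_assoc]
  have hzero : ∀ w ∈ [v], ∀ i ∈ consec (c + 1) n, e w i = 0 := by
    simp only [List.mem_singleton, mem_consec]
    rintro _ rfl i hi
    simp [e, show i ≠ c by omega, hv]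
  rw [he, consec_succ, ← List.singleton_append, ← List.singleton_append (l := consec _ _),
    listDet_append_of_lower (by simp) hzero, consec_add, listDet_map_right]
  congr 1
  · simp [listDet_of_length_eq (n := 1), e]
  · rw [← listDet_eq_vecDet]
    exact listDet_congr fun w _ i hi => by
      simp [e, show i + 1 ≠ c by have := mem_consec.1 hi; omega]

theorem christoffel_comp_add (x : ℂ) (t : ℤ → ℂ) (l : ℤ) :
    christoffel x (fun i => t (i + l)) = fun i => christoffel x t (i + l) := by
  funext i
  simp only [christoffel, add_right_comm]

theorem christoffel_zpow (x : ℂ) {y : ℂ} (hy : y ≠ 0) (c : ℤ) :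
    christoffel x (fun i => y ^ (i - c)) = fun i => (y - x) * y ^ (i - c) := by
  funext i
  rw [christoffel, add_sub_right_comm, zpow_add_one₀ hy]
  ring

theorem vecDet_zpow_cons_shift {z : ℂ} (hz : z ≠ 0) (t : ℤ → ℂ) (a : ℕ) (c r : ℤ) :
    vecDet ((fun i => z ^ i) :: (consec c a).map fun l i => t (i + l)) (consec r (a + 1)) =
      z ^ r * hankel (christoffel z t) a (c + r) := by
  have hgeo : christoffel z (fun i => z ^ i) = 0 := by
    simpa [Pi.zero_def] using christoffel_zpow z hz 0
  rw [vecDet_cons_geometric hgeo, List.map_map, ← vecDet_shift]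
  simp only [Function.comp_def, christoffel_comp_add]

theorem vecDet_single_cons (vs : List (ℤ → ℂ)) (r : ℤ) (n : ℕ) :
    vecDet (Pi.single r 1 :: vs) (consec r (n + 1)) = vecDet vs (consec (r + 1) n) := by
  have hzero : ∀ v ∈ [(Pi.single r 1 : ℤ → ℂ)], ∀ i ∈ consec (r + 1) n, v i = 0 := by
    simp only [List.mem_singleton, mem_consec]
    rintro _ rfl i hi
    exact Pi.single_eq_of_ne (by omega) 1
  rw [consec_succ, ← List.singleton_append, ← List.singleton_append (l := consec _ _), vecDet,
    listDet_append_of_lower (by simp) hzero]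
  simp [listDet_of_length_eq (n := 1), vecDet]

theorem vecDet_append_single {vs : List (ℤ → ℂ)} {n : ℕ} (hn : vs.length = n) (r : ℤ) :
    vecDet (vs ++ [Pi.single (r + n) 1]) (consec r (n + 1)) = vecDet vs (consec r n) := by
  have hzero : ∀ v ∈ [(Pi.single (r + n) 1 : ℤ → ℂ)], ∀ i ∈ consec r n, v i = 0 := by
    simp only [List.mem_singleton, mem_consec]
    rintro _ rfl i hi
    exact Pi.single_eq_of_ne (by omega) 1
  rw [consec_succ', vecDet_append_of_forall_eq_zero (by simpa using hn) hzero,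
    vecDet_of_length_eq (vs := [_]) (n := 1) rfl rfl]
  simp

theorem hankel_plucker₁ {z : ℂ} (hz : z ≠ 0) (t : ℤ → ℂ) (a : ℕ) (c : ℤ) :
    hankel t (a + 1) (c - 1) * hankel (christoffel z t) a (c - 1) -
      hankel t a c * hankel (christoffel z t) (a + 1) (c - 2) =
      z * hankel t (a + 1) (c - 2) * hankel (christoffel z t) a c := by
  let σ (l i : ℤ) : ℂ := t (i + l)
  have hσ : (consec (c - 2) (a + 1)).map σ = σ (c - 2) :: (consec (c - 1) a).map σ := by
    rw [consec_succ, List.map_cons, show c - 2 + 1 = c - 1 by ring]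
  have hlen : ((consec (c - 1) a).map σ).length = a := by simp
  have h := vecDet_plucker ((consec (c - 1) a).map σ) (Pi.single 0 1) (σ (c - 2)) (fun i => z ^ i)
    (Pi.single (0 + (a + 1 : ℕ)) 1) (consec 0 (a + 2))
  rw [vecDet_single_cons, vecDet_single_cons, vecDet_single_cons, vecDet_swap_head (σ (c - 2)),
    ← List.cons_append, ← List.cons_append, ← hσ, vecDet_append_single (by simp),
    vecDet_append_single (by simp), show (0 : ℤ) + (a + 1 : ℕ) = 0 + 1 + a by push_cast; ring,
    vecDet_append_single hlen, vecDet_shift, vecDet_shift, vecDet_shift,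
    vecDet_zpow_cons_shift hz, vecDet_zpow_cons_shift hz, vecDet_zpow_cons_shift hz] at h
  simp only [zpow_zero, zero_add, add_zero, zpow_one, sub_add_cancel,
    show c - 2 + 1 = c - 1 by ring] at h
  linear_combination h

theorem hankel_plucker₂ {z : ℂ} (hz : z ≠ 0) (t : ℤ → ℂ) (a : ℕ) (c : ℤ) :
    hankel t (a + 1) c * hankel (christoffel z t) (a + 1) c -
      hankel t (a + 1) (c + 1) * hankel (christoffel z t) (a + 1) (c - 1) =
      z * hankel t (a + 2) (c - 1) * hankel (christoffel z t) a (c + 1) := by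
  let σ (l i : ℤ) : ℂ := t (i + l)
  have hσ : σ (c - 1) :: (consec c a).map σ = (consec (c - 1) (a + 1)).map σ := by
    rw [consec_succ, List.map_cons, sub_add_cancel]
  have hσ' : (consec c a).map σ ++ [σ (c + a)] = (consec c (a + 1)).map σ := by
    rw [consec_succ', List.map_append, List.map_singleton]
  have hσ'' : σ (c - 1) :: (consec c (a + 1)).map σ = (consec (c - 1) (a + 2)).map σ := by
    rw [consec_succ (c - 1), List.map_cons, sub_add_cancel]
  have h := vecDet_plucker ((consec c a).map σ) (σ (c - 1)) (Pi.single 0 1) (fun i => z ^ i)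
    (σ (c + a)) (consec 0 (a + 2))
  rw [hσ', hσ'', vecDet_single_cons, vecDet_single_cons, vecDet_swap_head (σ (c - 1)),
    vecDet_swap_head (σ (c - 1)), hσ, vecDet_single_cons, vecDet_shift, vecDet_shift,
    vecDet_shift, vecDet_zpow_cons_shift hz, vecDet_zpow_cons_shift hz,
    vecDet_zpow_cons_shift hz] at h
  simp only [zpow_zero, zero_add, add_zero, zpow_one, sub_add_cancel] at h
  linear_combination -h

end Hankel

section Elimination
variable {κ : Type*}

/-- The composite of the Christoffel transforms at all points of `F`. -/
def iterChristoffel (F : List ℂ) (t : ℤ → ℂ) : ℤ → ℂ := F.foldl (fun t x => christoffel x t) t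

theorem christoffel_comm (x y : ℂ) (t : ℤ → ℂ) :
    christoffel x (christoffel y t) = christoffel y (christoffel x t) := by
  funext i
  simp only [christoffel]
  ring

theorem iterChristoffel_christoffel (F : List ℂ) (x : ℂ) (t : ℤ → ℂ) :
    iterChristoffel F (christoffel x t) = christoffel x (iterChristoffel F t) := by
  induction F generalizing t with
  | nil => rfl
  | cons y F ih =>
    simp only [iterChristoffel, List.foldl_cons] at ih ⊢
    rw [christoffel_comm, ih]

theorem iterChristoffel_perm {F F' : List ℂ} (h : F.Perm F') (t : ℤ → ℂ) :
    iterChristoffel F t = iterChristoffel F' t :=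
  have : RightCommutative fun t x => christoffel x t := ⟨fun _ _ _ => christoffel_comm _ _ _⟩
  h.foldl_eq t

theorem iterChristoffel_comp_add (F : List ℂ) (t : ℤ → ℂ) (l : ℤ) :
    iterChristoffel F (fun i => t (i + l)) = fun i => iterChristoffel F t (i + l) := by
  induction F generalizing t with
  | nil => rfl
  | cons x F ih =>
    simp only [iterChristoffel, List.foldl_cons] at ih ⊢
    rw [christoffel_comp_add, ih]

theorem iterChristoffel_congr {F : List ℂ} {t t' : ℤ → ℂ} {i : ℤ}
    (h : ∀ j, i ≤ j → j ≤ i + F.length → t j = t' j) :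
    iterChristoffel F t i = iterChristoffel F t' i := by
  induction F generalizing t t' with
  | nil => exact h i le_rfl (by simp)
  | cons x F ih =>
    refine ih fun j hj hj' => ?_
    rw [List.length_cons, Nat.cast_succ] at h
    simp only [christoffel]
    rw [h j (by omega) (by omega), h (j + 1) (by omega) (by omega)]

theorem iterChristoffel_neg (F : List ℂ) (t : ℤ → ℂ) :
    iterChristoffel F (fun i => - t i) = fun i => - iterChristoffel F t i := by
  induction F generalizing t with
  | nil => rfl
  | cons x F ih =>
    rw [iterChristoffel, List.foldl_cons, show christoffel x (fun i => - t i) =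
      fun i => - christoffel x t i by funext i; simp only [christoffel]; ring]
    exact ih _

theorem iterChristoffel_sum_zpow (F : List ℂ) {B : List ℂ} (hB : ∀ b ∈ B, b ≠ 0) (u : ℂ → ℂ) :
    iterChristoffel F (fun i => (B.map fun b => b ^ i * u b).sum) =
      fun i => (B.map fun b => b ^ i * (u b * nodal F b)).sum := by
  induction F generalizing u with
  | nil => simp [iterChristoffel, nodal]
  | cons x F ih =>
    have hx : christoffel x (fun i => (B.map fun b => b ^ i * u b).sum) =
        fun i => (B.map fun b => b ^ i * (u b * (b - x))).sum := by
      funext i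
      rw [christoffel, ← List.sum_map_mul_left, sub_eq_iff_eq_add, ← List.sum_map_add]
      congr 1
      refine List.map_congr_left fun b hb => ?_
      rw [zpow_add_one₀ (hB b hb)]
      ring
    rw [iterChristoffel, List.foldl_cons, hx]
    refine (ih _).trans ?_
    simp only [nodal, List.map_cons, List.prod_cons, mul_assoc]

theorem vecDet_append_mul {α : Type*} (vs : List (κ → ℂ)) (L : List α) (u : α → ℂ)
    (w : α → κ → ℂ) (ks : List κ) :
    vecDet (vs ++ L.map fun x k => u x * w x k) ks =
      (L.map u).prod * vecDet (vs ++ L.map w) ks := by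
  have h := vecDet_map_mul (vs.map Sum.inl ++ L.map Sum.inr) (Sum.elim (fun _ => 1) u)
    (Sum.elim id w) ks
  simpa [Function.comp_def] using h

theorem vecDet_append_zpow_cons (vs : List (ℤ → ℂ)) {f : ℂ} {F : List ℂ} (hf : f ≠ 0)
    (hF : ∀ x ∈ F, x ≠ 0) (c : ℤ) (n : ℕ) :
    vecDet (vs ++ (f :: F).map fun x i => x ^ (i - c)) (consec c (n + 1)) =
      (-1) ^ vs.length * (F.map (· - f)).prod *
        vecDet (vs.map (christoffel f) ++ F.map fun x i => x ^ (i - c)) (consec c n) := by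
  have hgeo : christoffel f (fun i => f ^ (i - c)) = 0 := by
    rw [christoffel_zpow f hf]; simp [Pi.zero_def]
  have hF' : F.map (fun x => christoffel f fun i => x ^ (i - c)) =
      F.map fun x i => (x - f) * x ^ (i - c) :=
    List.map_congr_left fun x hx => christoffel_zpow f (hF x hx) c
  have hmove := vecDet_swap [] vs [fun i => f ^ (i - c)] (F.map fun x i => x ^ (i - c))
    (consec c (n + 1))
  simp only [List.nil_append, List.length_singleton, mul_one, List.singleton_append] at hmove
  rw [List.map_cons, hmove, vecDet_cons_geometric hgeo, List.map_append, List.map_map,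
    Function.comp_def, hF', vecDet_append_mul, sub_self, zpow_zero, one_mul, mul_assoc]

theorem vecDet_append_zpow (vs : List (ℤ → ℂ)) {F : List ℂ} (hF : ∀ x ∈ F, x ≠ 0) (c : ℤ) :
    vecDet (vs ++ F.map fun x i => x ^ (i - c)) (consec c (vs.length + F.length)) =
      (-1) ^ (vs.length * F.length) * vandermonde F *
        vecDet (vs.map (iterChristoffel F)) (consec c vs.length) := by
  have hvandermonde :
      vecDet (F.map fun x i => x ^ (i - c)) (consec c F.length) = vandermonde F := by
    rw [← zero_add c, consec_add, vecDet_map_keys, List.map_map, vandermonde, listDet_eq_vecDet]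
    simp [Function.comp_def]
  rw [← hvandermonde]
  clear hvandermonde
  induction F generalizing vs with
  | nil =>
    simp [show iterChristoffel [] = id from rfl, vecDet, listDet_of_length_eq (n := 0)]
  | cons f F ih =>
    have hiter : iterChristoffel (f :: F) = iterChristoffel F ∘ christoffel f := rfl
    rw [List.forall_mem_cons] at hF
    have h := vecDet_append_zpow_cons [] hF.1 hF.2 c F.length
    have hlen : (vs.map (christoffel f)).length = vs.length := List.length_map _
    simp only [List.nil_append, List.map_nil, List.length_nil, pow_zero, one_mul] at h
    rw [List.length_cons, h, ← add_assoc, vecDet_append_zpow_cons _ hF.1 hF.2, ← hlen,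
      ih _ hF.2, List.map_map, hlen, hiter]
    ring

end Elimination

section SuperMoment

/-- The moments of the Lagrange weights of `B₁ ++ B₂`, restricted to the nodes `B₁` in
nonnegative degrees and to the nodes `B₂` (with a minus sign) in negative degrees. -/
noncomputable def superMoment (B₁ B₂ : List ℂ) (i : ℤ) : ℂ :=
  powerMoment (B₁ ++ B₂) i - (B₂.map fun b => b ^ i * weight (B₁ ++ B₂) b).sum

/-- The sequence whose Hankel determinants are the supercharacters. -/
noncomputable def superSeq (B₁ B₂ F : List ℂ) : ℤ → ℂ := iterChristoffel F (superMoment B₁ B₂)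

theorem superMoment_perm {B₁ B₁' : List ℂ} (h : B₁.Perm B₁') (B₂ : List ℂ) :
    superMoment B₁ B₂ = superMoment B₁' B₂ := by
  have hB := h.append_right B₂
  have hw : weight (B₁ ++ B₂) = weight (B₁' ++ B₂) := by
    funext x
    rw [weight, weight, List.toFinset_eq_of_perm _ _ hB]
  have hH : powerMoment (B₁ ++ B₂) = powerMoment (B₁' ++ B₂) := by
    funext i
    rw [powerMoment, powerMoment, hw, (hB.map _).sum_eq]
    simp only [← List.length_eq_zero_iff, hB.length_eq]
  funext i
  rw [superMoment, superMoment, hw, hH]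

theorem superMoment_cons {b : ℂ} {B₁ B₂ : List ℂ} (hB : (b :: (B₁ ++ B₂)).Nodup)
    (hB₂ : ∀ x ∈ B₂, x ≠ 0) :
    superMoment B₁ B₂ = christoffel b (superMoment (b :: B₁) B₂) := by
  funext i
  have hsum : (B₂.map fun x => x ^ i * weight (B₁ ++ B₂) x).sum +
      b * (B₂.map fun x => x ^ i * weight (b :: (B₁ ++ B₂)) x).sum =
        (B₂.map fun x => x ^ (i + 1) * weight (b :: (B₁ ++ B₂)) x).sum := by
    rw [← List.sum_map_mul_left, ← List.sum_map_add]
    congr 1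
    refine List.map_congr_left fun x hx => ?_
    have hne : x - b ≠ 0 :=
      sub_ne_zero.2 (ne_of_mem_of_not_mem (List.mem_append_right _ hx) hB.notMem)
    rw [weight_cons_of_mem hB (List.mem_append_right _ hx), zpow_add_one₀ (hB₂ x hx)]
    field_simp
    ring
  rw [christoffel, superMoment, superMoment, superMoment, List.cons_append, powerMoment_cons hB,
    ← hsum]
  ring

end SuperMoment

section RowOperations
variable {α κ : Type*}

theorem vecDet_congr {vs vs' : List (κ → ℂ)} {ks : List κ}
    (h : List.Forall₂ (fun v v' => ∀ k ∈ ks, v k = v' k) vs vs') :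
    vecDet vs ks = vecDet vs' ks := by
  by_cases hlen : vs.length = ks.length
  · rw [vecDet_of_length_eq hlen rfl, vecDet_of_length_eq (h.length_eq ▸ hlen) rfl]
    congr 1
    ext i j
    exact h.get _ _ _ (List.getElem_mem _)
  · rw [vecDet_of_length_ne hlen, vecDet_of_length_ne (h.length_eq ▸ hlen)]

theorem forall₂_map_map {β : Type*} {R : β → β → Prop} {L : List α} {u u' : α → β}
    (h : ∀ x ∈ L, R (u x) (u' x)) : List.Forall₂ R (L.map u) (L.map u') := by
  simpa only [List.forall₂_map_left_iff, List.forall₂_map_right_iff] using List.forall₂_same.2 h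

theorem vecDet_eq_zero_of_key {vs : List (κ → ℂ)} {ks : List κ} {k : κ} (hk : k ∈ ks)
    (hv : ∀ v ∈ vs, v k = 0) : vecDet vs ks = 0 := by
  by_cases hlen : vs.length = ks.length
  · obtain ⟨j, hj, rfl⟩ := List.getElem_of_mem hk
    rw [vecDet_of_length_eq hlen rfl]
    exact Matrix.det_eq_zero_of_column_eq_zero ⟨j, hj⟩ fun i => hv _ (List.getElem_mem _)
  · exact vecDet_of_length_ne hlen

theorem vecDet_mul_keys (vs : List (κ → ℂ)) (c : κ → ℂ) (ks : List κ) :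
    vecDet (vs.map fun v k => c k * v k) ks = (ks.map c).prod * vecDet vs ks := by
  rw [← listDet_eq_vecDet]
  simpa [vecDet] using listDet_scale vs ks (fun _ => 1) c fun v k => v k

theorem vecDet_add_mul_cons (v w : κ → ℂ) (x : ℂ) (vs : List (κ → ℂ)) (ks : List κ) :
    vecDet ((fun k => v k + x * w k) :: vs) ks = vecDet (v :: vs) ks + x * vecDet (w :: vs) ks := by
  by_cases hlen : ks.length = vs.length + 1
  · rw [vecDet_of_length_eq (n := vs.length + 1) rfl hlen,
      vecDet_of_length_eq (n := vs.length + 1) rfl hlen,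
      vecDet_of_length_eq (n := vs.length + 1) rfl hlen, Matrix.det_succ_row_zero,
      Matrix.det_succ_row_zero, Matrix.det_succ_row_zero, Finset.mul_sum,
      ← Finset.sum_add_distrib]
    refine Finset.sum_congr rfl fun j _ => ?_
    have hhead (u : κ → ℂ) : (u :: vs)[(0 : Fin (vs.length + 1))] = u := rfl
    have htail (u : κ → ℂ) (i : Fin vs.length) : (u :: vs)[i.succ] = vs[i] := rfl
    simp only [Matrix.of_apply, hhead, Matrix.submatrix, htail]
    ring
  · simp [vecDet_of_length_ne (vs := _ :: vs) (Ne.symm hlen)]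

theorem vecDet_map_add_mul {L : List α} (u : α → κ → ℂ) (c : α → ℂ) {w : α → κ → ℂ}
    {Y : List (κ → ℂ)} (hw : ∀ x ∈ L, w x ∈ Y) (ks : List κ) :
    vecDet ((L.map fun x k => u x k + c x * w x k) ++ Y) ks = vecDet (L.map u ++ Y) ks := by
  induction L generalizing Y with
  | nil => rfl
  | cons x L ih =>
    rw [List.forall_mem_cons] at hw
    have hmove (L' : List (κ → ℂ)) : vecDet (u x :: (L' ++ Y)) ks =
        (-1) ^ L'.length * vecDet (L' ++ (u x :: Y)) ks := by
      simpa using vecDet_swap [] [u x] L' Y ks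
    rw [List.map_cons, List.cons_append, vecDet_add_mul_cons,
      vecDet_cons_eq_zero (List.mem_append_right _ hw.1), mul_zero, add_zero, hmove,
      ih fun y hy => List.mem_cons_of_mem _ (hw.2 y hy), List.length_map, List.map_cons,
      List.cons_append, hmove, List.length_map]

theorem exists_map_append {β : Type*} {L₁ L₂ : List α} (h : (L₁ ++ L₂).Nodup) (u₁ u₂ : α → β) :
    ∃ u : α → β, (∀ x ∈ L₁, u x = u₁ x) ∧ (∀ x ∈ L₂, u x = u₂ x) := by
  classical
  refine ⟨fun x => if x ∈ L₁ then u₁ x else u₂ x, fun x hx => if_pos hx, fun x hx => if_neg ?_⟩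
  exact fun hx' => (List.nodup_append.1 h).2.2 x hx' x hx rfl

theorem hankel_congr {t t' : ℤ → ℂ} {a : ℕ} {c : ℤ}
    (h : ∀ i, c ≤ i → i ≤ c + 2 * a - 2 → t i = t' i) : hankel t a c = hankel t' a c := by
  rw [hankel, hankel, ← listDet_eq_vecDet, ← listDet_eq_vecDet]
  refine listDet_congr fun l hl i hi => ?_
  rw [mem_consec] at hl hi
  exact h _ (by omega) (by omega)

theorem hankel_neg (t : ℤ → ℂ) (a : ℕ) (c : ℤ) :
    hankel (fun i => - t i) a c = (-1) ^ a * hankel t a c := by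
  have h := vecDet_map_mul (consec 0 a) (fun _ => -1) (fun l i => t (i + l)) (consec c a)
  simpa [hankel] using h

end RowOperations

section SparseDeterminant

/-- The keys of the bordered form of the determinant `Delta`: its rows in `B₁`, in `B₂` and in
the two parts of `R`, and one additional key for each element of `F`. -/
inductive Key
  | fermi (f : ℂ)
  | bose₁ (b : ℂ)
  | bose₂ (b : ℂ)
  | aux₁ (j : ℤ)
  | aux₂ (j : ℤ)

/-- The part of the column `f ∈ F` of `Delta` living on the first wing. -/
noncomputable def cauchy₁ (η : ℤ) (f : ℂ) : Key → ℂ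
  | .fermi f' => if f' = f then f ^ η else 0
  | .bose₁ b => 1 / (b - f)
  | .aux₁ j => f ^ (j - 1)
  | _ => 0

/-- The part of the column `f ∈ F` of `Delta` living on the second wing, so normalized that
`cauchy₁ η f + f ^ η • cauchy₂ η f` vanishes on the keys `fermi`. -/
noncomputable def cauchy₂ (η : ℤ) (f : ℂ) : Key → ℂ
  | .fermi f' => if f' = f then -1 else 0
  | .bose₂ b => b ^ (-η) / (b - f)
  | .aux₂ j => f ^ (j - 1)
  | _ => 0

/-- The powers of the elements of `B₁`. -/
noncomputable def power₁ (i : ℤ) : Key → ℂ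
  | .bose₁ b => b ^ i
  | _ => 0

/-- The powers of the elements of `B₂`. -/
noncomputable def power₂ (i : ℤ) : Key → ℂ
  | .bose₂ b => b ^ i
  | _ => 0

theorem Delta_map {ι : Type*} (z : ι → ℂ) (B₁ B₂ F : List ι) (R S T₁ T₂ : List ℤ) (η : ℤ) :
    Delta z B₁ B₂ F R S T₁ T₂ η = Delta id (B₁.map z) (B₂.map z) (F.map z) R S T₁ T₂ η := by
  have hrows : ((B₁.map z).map Sum.inl ++ (B₂.map z).map (fun b => Sum.inr (Sum.inl b)) ++
      R.map fun r => Sum.inr (Sum.inr r)) = (B₁.map Sum.inl ++ B₂.map (fun b => Sum.inr (Sum.inl b))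
        ++ R.map fun r => Sum.inr (Sum.inr r)).map (Sum.map z (Sum.map z id)) := by
    simp [Function.comp_def]
  have hcols : ((F.map z).map Sum.inl ++ S.map (fun j => Sum.inr (Sum.inl j)) ++
      T₁.map (fun j => Sum.inr (Sum.inr (Sum.inl j))) ++
      T₂.map (fun j => Sum.inr (Sum.inr (Sum.inr j)))) =
      (F.map Sum.inl ++ S.map (fun j => Sum.inr (Sum.inl j)) ++
      T₁.map (fun j => Sum.inr (Sum.inr (Sum.inl j))) ++
      T₂.map (fun j => Sum.inr (Sum.inr (Sum.inr j)))).map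
        (Sum.map z (id : ℤ ⊕ (ℤ ⊕ ℤ) → ℤ ⊕ (ℤ ⊕ ℤ))) := by
    simp [Function.comp_def]
  rw [Delta, Delta, hrows, hcols, listDet_map_left, listDet_map_right]
  refine listDet_congr fun r _ c _ => ?_
  rcases r with r | r | r <;> rcases c with c | c | c | c <;> rfl

theorem pairProd_map {ι : Type*} (z : ι → ℂ) (L : List ι) (g : ℂ → ℂ → ℂ) :
    pairProd (L.map z) g = pairProd L fun x y => g (z x) (z y) := by
  refine Fintype.prod_equiv (finCongr (List.length_map _)) _ _ fun i =>
    Fintype.prod_equiv (finCongr (List.length_map _)) _ _ fun j => ?_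
  simp [← Fin.val_fin_lt]

theorem Dden_map {ι : Type*} (z : ι → ℂ) (B F : List ι) :
    Dden z B F = Dden id (B.map z) (F.map z) := by
  simp only [Dden, pairProd_map, prodLL, List.map_map, id, Function.comp_def]

theorem IsChi.map {ι : Type*} {z : ι → ℂ} {B₁ B₂ F₁ F₂ : List ι} {χ : ℤ → ℤ → ℂ}
    (h : IsChi z B₁ B₂ F₁ F₂ χ) :
    IsChi id (B₁.map z) (B₂.map z) (F₁.map z) (F₂.map z) χ := by
  simp only [IsChi, Delta_map z, Dden_map z, List.map_append] at h
  simpa only [IsChi, List.length_map] using h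

theorem prod_neg_one_zpow_consec (c : ℤ) (k : ℕ) :
    ((consec 1 k).map fun j => (-1 : ℂ) ^ (c + j - 1)).prod = (-1) ^ (c * k + k.choose 2) := by
  induction k with
  | zero => simp
  | succ k ih =>
    rw [consec_succ', List.map_append, List.prod_append, ih, Nat.choose_succ_succ' k 1,
      List.map_singleton, List.prod_singleton, ← zpow_add₀ (by norm_num)]
    congr 1
    push_cast [Nat.choose_one_right]
    ring

/-- The row of `Delta` labelled by a key (with a junk value at the additional keys). -/
def Key.toRow (η : ℤ) : Key → ℂ ⊕ (ℂ ⊕ ℤ)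
  | .fermi f => .inl f
  | .bose₁ b => .inl b
  | .bose₂ b => .inr (.inl b)
  | .aux₁ j => .inr (.inr j)
  | .aux₂ j => .inr (.inr (η + j))

/-- The sign of the row `k` in the passage from `Delta` to its bordered form. -/
noncomputable def Key.sign (η : ℤ) : Key → ℂ
  | .fermi _ => 1
  | .bose₁ _ => 1
  | .bose₂ _ => (-1) ^ η
  | .aux₁ j => (-1) ^ (j - 1)
  | .aux₂ j => (-1) ^ (η + j - 1)

theorem map_toRow (B₁ B₂ : List ℂ) (k₁ k₂ : ℕ) (η : ℤ) :
    (B₁.map Key.bose₁ ++ (B₂.map Key.bose₂ ++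
        ((consec 1 k₁).map Key.aux₁ ++ (consec 1 k₂).map Key.aux₂))).map (Key.toRow η) =
      B₁.map .inl ++ B₂.map (fun b => .inr (.inl b)) ++
        (consec 1 k₁ ++ consec (η + 1) k₂).map fun r => .inr (.inr r) := by
  simp [Function.comp_def, Key.toRow, add_comm η 1, consec_add 1 η, add_comm η]

theorem prod_sign (B₁ B₂ : List ℂ) (k₁ k₂ : ℕ) (η : ℤ) :
    ((B₁.map Key.bose₁ ++ (B₂.map Key.bose₂ ++
        ((consec 1 k₁).map Key.aux₁ ++ (consec 1 k₂).map Key.aux₂))).map (Key.sign η)).prod =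
      (-1 : ℂ) ^ (η * (B₂.length + k₂) + k₁.choose 2 + k₂.choose 2) := by
  have h₁ := prod_neg_one_zpow_consec 0 k₁
  simp only [zero_add, zero_mul] at h₁
  simp only [List.map_append, List.prod_append, List.map_map, Function.comp_def, Key.sign,
    List.map_const', List.prod_replicate, h₁, prod_neg_one_zpow_consec, one_pow, one_mul,
    ← zpow_natCast ((-1 : ℂ) ^ η), ← zpow_mul,
    ← zpow_add₀ (neg_ne_zero.mpr (one_ne_zero (α := ℂ)))]
  ring_nf

theorem Delta_eq_vecDet (B₁ B₂ : List ℂ) {F : List ℂ} (hF : ∀ f ∈ F, f ≠ 0) (k₁ k₂ : ℕ)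
    (S T₁ T₂ : List ℤ) (η : ℤ) :
    Delta id B₁ B₂ F (consec 1 k₁ ++ consec (η + 1) k₂) S T₁ T₂ η =
      (-1) ^ (η * (B₂.length + T₂.length + k₂) + k₁.choose 2 + k₂.choose 2) *
        vecDet ((F.map fun f k => cauchy₁ η f k + f ^ η * cauchy₂ η f k) ++
          ((S.map fun j k => power₁ (j - 1) k + (-1) ^ η * power₂ (j - 1) k) ++
            ((T₁.map fun j => power₁ (j - 1)) ++ (T₂.map fun j => power₂ (j - 1)))))
          (B₁.map .bose₁ ++ (B₂.map .bose₂ ++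
            ((consec 1 k₁).map .aux₁ ++ (consec 1 k₂).map .aux₂))) := by
  let cols : List (ℂ ⊕ (ℤ ⊕ (ℤ ⊕ ℤ))) := F.map .inl ++ (S.map (fun j => .inr (.inl j)) ++
    (T₁.map (fun j => .inr (.inr (.inl j))) ++ T₂.map (fun j => .inr (.inr (.inr j)))))
  let v : ℂ ⊕ (ℤ ⊕ (ℤ ⊕ ℤ)) → ℂ
    | .inr (.inr (.inr _)) => (-1) ^ η
    | _ => 1
  let e : ℂ ⊕ (ℤ ⊕ (ℤ ⊕ ℤ)) → Key → ℂ
    | .inl f => fun k => cauchy₁ η f k + f ^ η * cauchy₂ η f k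
    | .inr (.inl j) => fun k => power₁ (j - 1) k + (-1) ^ η * power₂ (j - 1) k
    | .inr (.inr (.inl j)) => power₁ (j - 1)
    | .inr (.inr (.inr j)) => power₂ (j - 1)
  have hprod : (cols.map v).prod = (-1) ^ (η * T₂.length) := by
    simp [cols, v, Function.comp_def, zpow_mul]
  rw [Delta, ← map_toRow, listDet_map_left, List.append_assoc, List.append_assoc,
    listDet_congr (e' := fun k c => k.sign η * v c * e c k) ?_, listDet_scale, prod_sign, hprod,
    listDet_transpose, listDet_eq_vecDet, ← zpow_add₀ (by norm_num)]
  · simp only [e, List.map_append, List.map_map, Function.comp_def]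
    congr 2
    ring
  · have hsq (x : ℂ) : (-1) ^ η * ((-1) ^ η * x) = x := by
      rw [← mul_assoc, ← mul_zpow, neg_one_mul, neg_neg, one_zpow, one_mul]
    have hneg (f : ℂ) (i : ℤ) : (-f) ^ i = (-1) ^ i * f ^ i := by
      rw [neg_eq_neg_one_mul, mul_zpow]
    rintro (f' | b | b | j | j) hk (f | j' | j' | j') hc
    case bose₂.inl =>
      simp only [Key.toRow, Key.sign, v, e, cauchy₁, cauchy₂, div_zpow, hneg f, id, zpow_neg]
      ring
    case aux₁.inl =>
      simp [Key.toRow, Key.sign, v, e, cauchy₁, cauchy₂, hneg f]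
    case aux₂.inl =>
      have hf : f ≠ 0 := hF f (by simpa using hc)
      simp [Key.toRow, Key.sign, v, e, cauchy₁, cauchy₂, hneg f, add_sub_assoc,
        zpow_add₀ hf]
    all_goals
      first
      | simp at hk; done
      | simp [Key.toRow, Key.sign, v, e, cauchy₁, cauchy₂, power₁, power₂, hsq, mul_assoc]

end SparseDeterminant

section BosonElimination

/-- The number carried by a key (with a junk value at the auxiliary keys). -/
def Key.point : Key → ℂ
  | .fermi f => f
  | .bose₁ b => b
  | .bose₂ b => b
  | _ => 0

/-- The powers of the elements of `B₁` and `B₂`. -/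
noncomputable def power (i : ℤ) (k : Key) : ℂ := power₁ i k + power₂ i k

/-- The `l`-th moment of `φ` over the points of `B₁` and `B₂`, completed by the values of `φ` at
`g` auxiliary keys. -/
noncomputable def boseMoment (B₁ B₂ : List ℂ) (g : ℕ) (l : ℤ) (φ : Key → ℂ) : ℂ :=
  (B₁.map fun b => b ^ l * weight (B₁ ++ B₂) b * φ (.bose₁ b)).sum +
    (B₂.map fun b => b ^ l * weight (B₁ ++ B₂) b * φ (.bose₂ b)).sum +
    ((consec 1 g).map fun j => powerMoment (B₁ ++ B₂) (l - j) * φ (.aux₁ j)).sum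

theorem vecDet_power_append {B₁ B₂ : List ℂ} (hB : (B₁ ++ B₂).Nodup) {a d g : ℕ}
    (hlen : (B₁ ++ B₂).length + g = a + d) (hdg : d = 0 ∨ g = 0) (F : List ℂ)
    (vs : List (Key → ℂ)) :
    vecDet ((consec 0 d).map power ++ vs)
        ((B₁.map .bose₁ ++ B₂.map .bose₂) ++ ((consec 1 g).map .aux₁ ++ F.map .fermi)) =
      (-1) ^ ((B₁ ++ B₂).length.choose 2 + d.choose 2 + a * d) * vandermonde (B₁ ++ B₂) *
        vecDet ((consec 0 a).map (boseMoment B₁ B₂ g) ++ F.map fun f φ => φ (.fermi f)) vs := by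
  obtain ⟨u, hu₁, hu₂⟩ := exists_map_append hB (fun b (φ : Key → ℂ) => φ (.bose₁ b))
    fun b φ => φ (.bose₂ b)
  have hmap₁ {β : Type} (G : ℂ → ((Key → ℂ) → ℂ) → β) :
      (B₁.map fun b => G b (u b)) = B₁.map fun b => G b fun φ => φ (.bose₁ b) :=
    List.map_congr_left fun b hb => by rw [hu₁ b hb]
  have hmap₂ {β : Type} (G : ℂ → ((Key → ℂ) → ℂ) → β) :
      (B₂.map fun b => G b (u b)) = B₂.map fun b => G b fun φ => φ (.bose₂ b) :=
    List.map_congr_left fun b hb => by rw [hu₂ b hb]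
  have hmoment : moment (B₁ ++ B₂) u g (fun j φ => φ (.aux₁ j)) = boseMoment B₁ B₂ g := by
    funext l φ
    rw [moment, boseMoment, List.map_append, List.sum_append,
      hmap₁ fun b y => b ^ l * weight (B₁ ++ B₂) b * y φ,
      hmap₂ fun b y => b ^ l * weight (B₁ ++ B₂) b * y φ]
  have hred := vecDet_moment_reduction hB hlen hdg (u := u) (v := fun j φ => φ (.aux₁ j))
    (p := power) (Y := F.map fun f φ => φ (.fermi f)) ?_ ?_ vs
  · rw [← vecDet_map_eval, ← hmoment, ← hred, List.map_append, List.map_append, List.map_append,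
      List.map_append, hmap₁ fun _ y => y, hmap₂ fun _ y => y]
    simp [Function.comp_def]
  · intro i _ x hx
    rcases List.mem_append.1 hx with hx | hx
    · simp [hu₁ x hx, power, power₁, power₂]
    · simp [hu₂ x hx, power, power₁, power₂]
  · simp [power, power₁, power₂]

end BosonElimination

section Wing

theorem vecDet_wing_fermi {B₁ B₂ F : List ℂ} (hF : F.Nodup)
    (hBF : ∀ b ∈ B₁ ++ B₂, b ∉ F) {p k D : ℕ} (hlen : F.length + p = D + k) (hpk : k = 0 ∨ p = 0)
    {Y : List (Key → ℂ)} (hY : ∀ y ∈ Y, ∀ j, y (.aux₁ j) = 0) :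
    vecDet ((F.map fun f k => cauchy₁ 0 f k + cauchy₂ 0 f k) ++
        (((consec 1 p).map fun j => power (j - 1)) ++ Y))
        ((B₁.map .bose₁ ++ B₂.map .bose₂) ++ (consec 1 k).map .aux₁) =
      (-1) ^ ((B₁ ++ B₂).length * k + F.length.choose 2 + k.choose 2 + D * k) * vandermonde F *
        vecDet (((consec 0 D).map fun l k => power l k / nodal F k.point) ++ Y)
          (B₁.map .bose₁ ++ B₂.map .bose₂) := by
  have hred := vecDet_moment_reduction hF hlen hpk
    (u := fun f k => cauchy₁ 0 f k + cauchy₂ 0 f k) (v := fun j => power (j - 1))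
    (p := fun i => .aux₁ (i + 1)) (Y := Y) (by simp [cauchy₁, cauchy₂])
    (fun i _ y hy => hY y hy _) (B₁.map .bose₁ ++ B₂.map .bose₂)
  have haux : (consec 1 k).map Key.aux₁ = (consec 0 k).map fun i => .aux₁ (i + 1) := by
    simpa [Function.comp_def] using congrArg (List.map Key.aux₁) (consec_add 0 1 k)
  have hswap := vecDet_swap_keys ((F.map fun f k => cauchy₁ 0 f k + cauchy₂ 0 f k) ++
    (((consec 1 p).map fun j => power (j - 1)) ++ Y)) [] (B₁.map .bose₁ ++ B₂.map .bose₂)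
    ((consec 1 k).map .aux₁) []
  simp only [List.append_nil, List.nil_append] at hswap
  have hcongr : vecDet ((consec 0 D).map (moment F (fun f k => cauchy₁ 0 f k + cauchy₂ 0 f k) p
        fun j => power (j - 1)) ++ Y) (B₁.map .bose₁ ++ B₂.map .bose₂) =
      vecDet (((consec 0 D).map fun l k => power l k / nodal F k.point) ++ Y)
        (B₁.map .bose₁ ++ B₂.map .bose₂) := by
    refine vecDet_congr (List.rel_append (forall₂_map_map fun l hl κ hκ => ?_)
      (List.forall₂_same.2 fun _ _ _ _ => rfl))
    have hl := mem_consec.1 hl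
    obtain ⟨b, hb, hκ⟩ : ∃ b ∈ B₁ ++ B₂, κ = .bose₁ b ∨ κ = .bose₂ b := by
      simp only [List.mem_append, List.mem_map] at hκ ⊢
      grind
    have hbF : (b :: F).Nodup := List.nodup_cons.2 ⟨hBF b hb, hF⟩
    rcases hκ with rfl | rfl <;>
    · rw [moment_of_eq_div_sub (y := 1) hbF (by simp [cauchy₁, cauchy₂])
        (by simp [power, power₁, power₂]) hl.1 (by omega)]
      simp [power, power₁, power₂, Key.point]
  rw [hswap, haux, hred, hcongr]
  simp only [List.length_append, List.length_map, length_consec]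
  ring

theorem vecDet_div_nodal {B₁ B₂ F : List ℂ} (hB : (B₁ ++ B₂).Nodup) (hBF : ∀ b ∈ B₁ ++ B₂, b ∉ F)
    {a D : ℕ} (hlen : (B₁ ++ B₂).length = a + D) (Y : List (Key → ℂ)) :
    vecDet (((consec 0 D).map fun l k => power l k / nodal F k.point) ++ Y)
        (B₁.map .bose₁ ++ B₂.map .bose₂) * ((B₁ ++ B₂).map (nodal F)).prod =
      (-1) ^ ((B₁ ++ B₂).length.choose 2 + D.choose 2 + a * D) * vandermonde (B₁ ++ B₂) *
        vecDet ((consec 0 a).map (boseMoment B₁ B₂ 0))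
          (Y.map fun φ k => nodal F k.point * φ k) := by
  have hmul := vecDet_mul_keys (((consec 0 D).map fun l k => power l k / nodal F k.point) ++ Y)
    (fun k => nodal F k.point) (B₁.map .bose₁ ++ B₂.map .bose₂)
  have hpower := vecDet_power_append hB (g := 0) hlen (.inr rfl) []
    (Y.map fun φ k => nodal F k.point * φ k)
  have hprod : ((B₁.map Key.bose₁ ++ B₂.map Key.bose₂).map fun k => nodal F k.point).prod =
      ((B₁ ++ B₂).map (nodal F)).prod := by
    simp [Function.comp_def, Key.point]
  simp only [consec_zero, List.map_nil, List.append_nil] at hpower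
  rw [mul_comm, ← hprod, ← hmul, ← hpower, List.map_append, List.map_map]
  refine vecDet_congr (List.rel_append (forall₂_map_map fun l _ k hk => ?_)
    (List.forall₂_same.2 fun _ _ _ _ => rfl))
  have hk : nodal F k.point ≠ 0 := by
    simp only [List.mem_append, List.mem_map] at hk hBF
    rcases hk with ⟨b, hb, rfl⟩ | ⟨b, hb, rfl⟩ <;> exact nodal_ne_zero (hBF b (by simp [hb]))
  exact mul_div_cancel₀ _ hk

theorem Delta_wing (B₁ B₂ : List ℂ) {F : List ℂ} (hF0 : ∀ f ∈ F, f ≠ 0) (k p : ℕ)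
    (T₁ T₂ : List ℤ) :
    Delta id B₁ B₂ F (consec 1 k) (consec 1 p) T₁ T₂ 0 = (-1) ^ k.choose 2 *
      vecDet ((F.map fun f κ => cauchy₁ 0 f κ + cauchy₂ 0 f κ) ++
          (((consec 1 p).map fun j => power (j - 1)) ++
            (T₁.map (fun j => power₁ (j - 1)) ++ T₂.map fun j => power₂ (j - 1))))
        ((B₁.map .bose₁ ++ B₂.map .bose₂) ++ (consec 1 k).map .aux₁) := by
  have h := Delta_eq_vecDet B₁ B₂ hF0 k 0 (consec 1 p) T₁ T₂ 0
  simp only [zpow_zero, one_mul, zero_mul, zero_add, Nat.choose_zero_succ, CharP.cast_eq_zero,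
    add_zero, consec_zero, List.map_nil, List.append_nil, zpow_natCast] at h
  rw [h, List.append_assoc]
  rfl

theorem Delta_div_Dden_wing {B₁ B₂ F : List ℂ} (hB : (B₁ ++ B₂).Nodup) (hF : F.Nodup)
    (hBF : ∀ b ∈ B₁ ++ B₂, b ∉ F) (hF0 : ∀ f ∈ F, f ≠ 0) {a D p k : ℕ}
    (hm : (B₁ ++ B₂).length = a + D) (hn : F.length + p = D + k) (hpk : k = 0 ∨ p = 0)
    (T₁ T₂ : List ℤ) :
    Delta id B₁ B₂ F (consec 1 k) (consec 1 p) T₁ T₂ 0 / Dden id (B₁ ++ B₂) F =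
      (-1) ^ (a * k + F.length.choose 2 + D.choose 2 + a * D) *
        vecDet ((consec 0 a).map (boseMoment B₁ B₂ 0))
          (T₁.map (fun j κ => nodal F κ.point * power₁ (j - 1) κ) ++
            T₂.map fun j κ => nodal F κ.point * power₂ (j - 1) κ) := by
  have hfermi := vecDet_wing_fermi hF hBF hn hpk
    (Y := T₁.map (fun j => power₁ (j - 1)) ++ T₂.map fun j => power₂ (j - 1)) ?_
  · have hbose := vecDet_div_nodal hB hBF hm
      (T₁.map (fun j => power₁ (j - 1)) ++ T₂.map fun j => power₂ (j - 1))
    simp only [List.map_append (l₁ := T₁.map _), List.map_map, Function.comp_def] at hbose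
    have hsign : (-1 : ℂ) ^ (k.choose 2 + ((B₁ ++ B₂).length * k + F.length.choose 2 +
        k.choose 2 + D * k) + ((B₁ ++ B₂).length.choose 2 + D.choose 2 + a * D) +
          (B₁ ++ B₂).length.choose 2) =
        (-1) ^ (a * k + F.length.choose 2 + D.choose 2 + a * D) := by
      refine neg_one_pow_eq_of_cast_eq ?_
      rw [hm]
      push_cast
      grind
    rw [Delta_wing B₁ B₂ hF0, hfermi, ← hsign]
    refine (div_Dden_id hB hF (s := (-1) ^ (k.choose 2 + ((B₁ ++ B₂).length * k +
      F.length.choose 2 + k.choose 2 + D * k) + ((B₁ ++ B₂).length.choose 2 + D.choose 2 + a * D)))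
      ?_).trans (by rw [← pow_add])
    rw [mul_left_comm, mul_left_comm _ (_ * vandermonde F), mul_comm _ (vecDet _ _), hbose]
    ring
  · simp only [List.mem_append, List.mem_map]
    rintro _ (⟨j, -, rfl⟩ | ⟨j, -, rfl⟩) _ <;> rfl

theorem vecDet_boseMoment_power₁ {B₁ B₂ F : List ℂ} (hB0 : ∀ b ∈ B₁, b ≠ 0) (a : ℕ) {c : ℤ}
    (hc : 0 ≤ c) :
    vecDet ((consec 0 a).map (boseMoment B₁ B₂ 0))
        ((consec (c + 1) a).map fun j κ => nodal F κ.point * power₁ (j - 1) κ) =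
      hankel (superSeq B₁ B₂ F) a c := by
  have hsum := iterChristoffel_sum_zpow F hB0 (weight (B₁ ++ B₂))
  have hseq : hankel (superSeq B₁ B₂ F) a c = hankel (fun i =>
      (B₁.map fun b => b ^ i * (weight (B₁ ++ B₂) b * nodal F b)).sum) a c := by
    rw [← hsum]
    refine hankel_congr fun i hi _ => iterChristoffel_congr fun j hj _ => ?_
    rw [superMoment, powerMoment_of_nonneg (by omega), List.map_append, List.sum_append]
    ring
  rw [hseq, consec_add, List.map_map, vecDet_map_keys, List.map_map, hankel]
  congr 2
  funext l i
  simp only [Function.comp_def, boseMoment, power₁, Key.point, add_sub_cancel_right, mul_zero,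
    List.map_const', List.sum_replicate, nsmul_zero, add_zero, consec_zero, List.map_nil,
    List.sum_nil]
  refine congrArg List.sum (List.map_congr_left fun b hb => ?_)
  rw [zpow_add₀ (hB0 b hb)]
  ring

theorem vecDet_boseMoment_power₂ {B₁ B₂ F : List ℂ} (hB : (B₁ ++ B₂).Nodup) (hB0 : ∀ b ∈ B₂, b ≠ 0)
    {a : ℕ} {c : ℤ} (hc : c + 2 * a + F.length ≤ (B₁ ++ B₂).length) :
    vecDet ((consec 0 a).map (boseMoment B₁ B₂ 0))
        ((consec (c + 1) a).map fun j κ => nodal F κ.point * power₂ (j - 1) κ) =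
      (-1) ^ a * hankel (superSeq B₁ B₂ F) a c := by
  have hsum := iterChristoffel_sum_zpow F hB0 (weight (B₁ ++ B₂))
  have hseq : hankel (fun i => - superSeq B₁ B₂ F i) a c = hankel (fun i =>
      (B₂.map fun b => b ^ i * (weight (B₁ ++ B₂) b * nodal F b)).sum) a c := by
    rw [superSeq, ← iterChristoffel_neg, ← hsum]
    refine hankel_congr fun i _ _ => iterChristoffel_congr fun j _ _ => ?_
    rw [superMoment, powerMoment_eq_zero hB (by omega)]
    ring
  rw [← hankel_neg, hseq, consec_add, List.map_map, vecDet_map_keys, List.map_map, hankel]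
  congr 2
  funext l i
  simp only [Function.comp_def, boseMoment, power₂, Key.point, add_sub_cancel_right, mul_zero,
    List.map_const', List.sum_replicate, nsmul_zero, zero_add, add_zero, consec_zero, List.map_nil,
    List.sum_nil]
  refine congrArg List.sum (List.map_congr_left fun b hb => ?_)
  rw [zpow_add₀ (hB0 b hb)]
  ring

end Wing

section Strip

theorem vecDet_cauchy₂_fermi {F : List ℂ} (hF : F.Nodup) (η : ℤ) :
    vecDet (F.map (cauchy₂ η)) (F.map .fermi) = (-1) ^ F.length := by
  rw [← listDet_eq_vecDet, listDet_map_right, listDet_of_length_eq rfl rfl]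
  have hdiag : (Matrix.of fun i j : Fin F.length => cauchy₂ η (F[i]) (.fermi F[j])) = -1 := by
    ext i j
    rw [Matrix.neg_apply, Matrix.one_apply]
    by_cases h : i = j
    · simp [cauchy₂, h]
    · have hne : F[j] ≠ F[i] := by
        simpa [Fin.getElem_fin, hF.getElem_inj_iff, Fin.val_inj, eq_comm] using h
      rw [if_neg h, neg_zero]
      exact if_neg hne
  simpa [Matrix.det_neg] using congrArg Matrix.det hdiag

theorem vecDet_cauchy₁_append_cauchy₂ {F : List ℂ} (hF : F.Nodup) (η : ℤ)
    {W₁ W₂ : List (Key → ℂ)} (hW : ∀ w ∈ W₁ ++ W₂, ∀ f, w (.fermi f) = 0) (A K : List Key) :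
    vecDet (F.map (cauchy₁ η) ++ (W₁ ++ (F.map (cauchy₂ η) ++ W₂)))
        (A ++ (F.map .fermi ++ K)) =
      (-1) ^ (F.length * W₁.length + A.length * (F.length + K.length)) *
        vecDet ((F.map fun f k => cauchy₁ η f k + f ^ η * cauchy₂ η f k) ++ (W₁ ++ W₂))
          (K ++ A) := by
  let col (f : ℂ) (k : Key) : ℂ := cauchy₁ η f k + f ^ η * cauchy₂ η f k
  have hadd := vecDet_map_add_mul (L := F) (cauchy₁ η) (fun f => f ^ η) (w := cauchy₂ η)
    (Y := W₁ ++ (F.map (cauchy₂ η) ++ W₂)) (fun f hf => List.mem_append_right _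
      (List.mem_append_left _ (List.mem_map_of_mem hf))) (A ++ (F.map .fermi ++ K))
  have hvs := vecDet_swap [] (F.map col ++ W₁) (F.map (cauchy₂ η)) W₂ (A ++ (F.map .fermi ++ K))
  have hks := vecDet_swap_keys (F.map (cauchy₂ η) ++ (F.map col ++ (W₁ ++ W₂))) [] A
    (F.map .fermi) K
  have hzero : ∀ v ∈ F.map col ++ (W₁ ++ W₂), ∀ k ∈ F.map Key.fermi, v k = 0 := by
    intro v hv k hk
    obtain ⟨f', -, rfl⟩ := List.mem_map.1 hk
    rcases List.mem_append.1 hv with hv | hv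
    · obtain ⟨f, -, rfl⟩ := List.mem_map.1 hv
      by_cases h : f' = f <;> simp [col, cauchy₁, cauchy₂, h]
    · exact hW v hv f'
  have hblock := vecDet_append_of_forall_eq_zero (vs₁ := F.map (cauchy₂ η)) (ks₁ := F.map .fermi)
    (ks₂ := A ++ K) (by simp) hzero
  have hAK := vecDet_swap_keys (F.map col ++ (W₁ ++ W₂)) [] A K []
  have hsign : (-1 : ℂ) ^ ((F.length + W₁.length) * F.length) * (-1) ^ (A.length * F.length) *
      ((-1) ^ F.length * (-1) ^ (A.length * K.length)) =
      (-1) ^ (F.length * W₁.length + A.length * (F.length + K.length)) := by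
    simp only [← pow_add]
    refine neg_one_pow_eq_of_cast_eq ?_
    push_cast
    have := ZMod.pow_card (F.length : ZMod 2)
    grind
  simp only [List.nil_append, List.append_nil, List.append_assoc, List.length_append,
    List.length_map] at hvs hks hAK
  rw [← hadd, hvs, hks, hblock, vecDet_cauchy₂_fermi hF, hAK, ← hsign]
  ring

theorem vecDet_strip_fermi {F : List ℂ} (hF : F.Nodup) {k₁ k₂ p₁ p₂ K₁ K₂ : ℕ}
    (h₁ : F.length + p₁ = K₁ + k₁) (h₂ : F.length + p₂ = K₂ + k₂) (hkp₁ : k₁ = 0 ∨ p₁ = 0)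
    (hkp₂ : k₂ = 0 ∨ p₂ = 0) (c : ℤ) (ks : List Key) :
    vecDet (F.map (cauchy₁ (-c)) ++ (((consec 1 p₁).map fun j => power₁ (j - 1)) ++
        (F.map (cauchy₂ (-c)) ++ (consec (c + 1) p₂).map fun j => power₂ (j - 1))))
        ((consec 1 k₁).map .aux₁ ++ ((consec 1 k₂).map .aux₂ ++ ks)) =
      (-1) ^ (k₁.choose 2 + K₁ * k₁ + K₁ * (F.length + p₂) + k₂.choose 2 + K₂ * k₂) *
        vandermonde F ^ 2 *
        vecDet ((consec 0 K₂).map (moment F (cauchy₂ (-c)) p₂ fun j => power₂ (j + c - 1)) ++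
          (consec 0 K₁).map (moment F (cauchy₁ (-c)) p₁ fun j => power₁ (j - 1))) ks := by
  let Y₁ := (consec 0 K₁).map (moment F (cauchy₁ (-c)) p₁ fun j => power₁ (j - 1))
  let Y₂ := F.map (cauchy₂ (-c)) ++ (consec 1 p₂).map fun j => power₂ (j + c - 1)
  have hY₁ : ∀ y ∈ Y₁, ∀ j, y (.aux₂ j) = 0 := by
    simp [Y₁, moment, cauchy₁, power₁]
  have hY₂ : ∀ y ∈ Y₂, ∀ j, y (.aux₁ j) = 0 := by
    simp only [Y₂, List.mem_append, List.mem_map]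
    rintro _ (⟨f, -, rfl⟩ | ⟨j, -, rfl⟩) _ <;> rfl
  have hred₁ := vecDet_moment_reduction hF h₁ hkp₁ (u := cauchy₁ (-c))
    (v := fun j => power₁ (j - 1)) (p := fun i => .aux₁ (i + 1)) (by simp [cauchy₁])
    (fun i _ y hy => hY₂ y hy _) ((consec 1 k₂).map .aux₂ ++ ks)
  have hred₂ := vecDet_moment_reduction hF h₂ hkp₂ (u := cauchy₂ (-c))
    (v := fun j => power₂ (j + c - 1)) (p := fun i => .aux₂ (i + 1)) (by simp [cauchy₂])
    (fun i _ y hy => hY₁ y hy _) ks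
  have hshift (g : ℤ → Key) (k : ℕ) : (consec 1 k).map g = (consec 0 k).map fun i => g (i + 1) := by
    simpa [Function.comp_def] using congrArg (List.map g) (consec_add 0 1 k)
  have hcols : (consec (c + 1) p₂).map (fun j => power₂ (j - 1)) =
      (consec 1 p₂).map fun j => power₂ (j + c - 1) := by
    rw [add_comm, consec_add, List.map_map]
    rfl
  have hswap := vecDet_swap [] Y₁ Y₂ [] ((consec 1 k₂).map .aux₂ ++ ks)
  have hsign : (-1 : ℂ) ^ (F.length.choose 2 + k₁.choose 2 + K₁ * k₁) *
      (-1) ^ (K₁ * (F.length + p₂)) * (-1) ^ (F.length.choose 2 + k₂.choose 2 + K₂ * k₂) =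
      (-1) ^ (k₁.choose 2 + K₁ * k₁ + K₁ * (F.length + p₂) + k₂.choose 2 + K₂ * k₂) := by
    simp only [← pow_add]
    refine neg_one_pow_eq_of_cast_eq ?_
    push_cast
    grind
  simp only [Y₁, Y₂, List.nil_append, List.append_nil, List.append_assoc, List.length_append,
    List.length_map, length_consec] at hswap
  rw [hcols, hshift Key.aux₁, hred₁, hswap, hshift Key.aux₂, hred₂, ← hsign]
  ring

/-- The powers of the elements of `B₁`, extended to the elements of `F`. -/
noncomputable def extPower₁ (c j : ℤ) : Key → ℂ
  | .fermi f => f ^ (j - c)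
  | .bose₁ b => b ^ j
  | _ => 0

/-- The powers of the elements of `B₂`, extended to the elements of `F` with the sign for which
`extPower₁ c j + extPower₂ c j = power j`. -/
noncomputable def extPower₂ (c j : ℤ) : Key → ℂ
  | .fermi f => -f ^ (j - c)
  | .bose₂ b => b ^ j
  | _ => 0

theorem sum_map_eq_single {α : Type*} {L : List α} (hL : L.Nodup) {x : α} (hx : x ∈ L)
    {u : α → ℂ} (hu : ∀ y ∈ L, y ≠ x → u y = 0) : (L.map u).sum = u x := by
  classical
  rw [List.sum_map_eq_nsmul_single x u fun y hyx hy => hu y hy hyx,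
    List.count_eq_one_of_mem hL hx, one_smul]

theorem moment_fermi {F : List ℂ} (hF : F.Nodup) {f : ℂ} (hf : f ∈ F) {u : ℂ → Key → ℂ}
    (hu : ∀ x, x ≠ f → u x (.fermi f) = 0) {v : ℤ → Key → ℂ} (hv : ∀ j, v j (.fermi f) = 0)
    (g : ℕ) (l : ℤ) :
    moment F u g v l (.fermi f) = f ^ l * weight F f * u f (.fermi f) := by
  rw [moment, sum_map_eq_single hF hf fun x _ hx => by rw [hu x hx, mul_zero]]
  simp [hv]

/-- The scaling of the keys turning the moments of `cauchy₁` and `cauchy₂` into `extPower₁` and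
`extPower₂`. -/
noncomputable def stripScale (F : List ℂ) : Key → ℂ
  | .fermi f => (weight F f)⁻¹
  | k => nodal F k.point

theorem stripScale_mul_moment_cauchy₁ {B₁ B₂ F : List ℂ} (hF : F.Nodup)
    (hBF : ∀ b ∈ B₁ ++ B₂, b ∉ F) (hF0 : ∀ f ∈ F, f ≠ 0) (c : ℤ) {g : ℕ} {l : ℤ} (hl : 0 ≤ l)
    (hlg : l < F.length + g) {k : Key}
    (hk : k ∈ F.map .fermi ++ (B₁.map .bose₁ ++ B₂.map .bose₂)) :
    stripScale F k * moment F (cauchy₁ (-c)) g (fun j => power₁ (j - 1)) l k =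
      extPower₁ c l k := by
  simp only [List.mem_append, List.mem_map] at hk hBF
  rcases hk with ⟨f, hf, rfl⟩ | ⟨b, hb, rfl⟩ | ⟨b, -, rfl⟩
  · rw [moment_fermi hF hf (fun x hx => by simp [cauchy₁, hx.symm]) fun _ => rfl]
    have := weight_ne_zero hF hf
    simp only [stripScale, cauchy₁, extPower₁, if_true, sub_eq_add_neg, zpow_add₀ (hF0 f hf)]
    field_simp
  · have hbF := hBF b (.inl hb)
    have := nodal_ne_zero hbF
    rw [moment_of_eq_div_sub (y := 1) (List.nodup_cons.2 ⟨hbF, hF⟩) (by simp [cauchy₁])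
      (by simp [power₁]) hl hlg]
    simp only [stripScale, Key.point, extPower₁]
    field_simp
  · simp [moment, cauchy₁, power₁, extPower₁]

theorem stripScale_mul_moment_cauchy₂ {B₁ B₂ F : List ℂ} (hB0 : ∀ b ∈ B₂, b ≠ 0) (hF : F.Nodup)
    (hBF : ∀ b ∈ B₁ ++ B₂, b ∉ F) (c : ℤ) {g : ℕ} {l : ℤ} (hl : 0 ≤ l)
    (hlg : l < F.length + g) {k : Key}
    (hk : k ∈ F.map .fermi ++ (B₁.map .bose₁ ++ B₂.map .bose₂)) :
    stripScale F k * moment F (cauchy₂ (-c)) g (fun j => power₂ (j + c - 1)) l k =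
      extPower₂ c (l + c) k := by
  simp only [List.mem_append, List.mem_map] at hk hBF
  rcases hk with ⟨f, hf, rfl⟩ | ⟨b, -, rfl⟩ | ⟨b, hb, rfl⟩
  · rw [moment_fermi hF hf (fun x hx => by simp [cauchy₂, hx.symm]) fun _ => rfl]
    have := weight_ne_zero hF hf
    simp only [stripScale, cauchy₂, extPower₂, if_true, add_sub_cancel_right]
    field_simp
  · simp [moment, cauchy₂, power₂, extPower₂]
  · have hbF := hBF b (.inr hb)
    have := nodal_ne_zero hbF
    have hb0 := hB0 b hb
    rw [moment_of_eq_div_sub (y := b ^ c) (List.nodup_cons.2 ⟨hbF, hF⟩)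
      (fun _ _ => by simp only [cauchy₂, neg_neg])
      (fun j => by rw [power₂, ← zpow_add₀ hb0]; congr 1; ring) hl hlg]
    simp only [stripScale, Key.point, extPower₂, zpow_add₀ hb0]
    field_simp

theorem prod_stripScale {F : List ℂ} (hF : F.Nodup) (B₁ B₂ : List ℂ) :
    ((F.map Key.fermi ++ (B₁.map Key.bose₁ ++ B₂.map Key.bose₂)).map (stripScale F)).prod =
      (-1) ^ F.length.choose 2 * vandermonde F ^ 2 * ((B₁ ++ B₂).map (nodal F)).prod := by
  have hinv : (F.map fun f => (weight F f)⁻¹).prod =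
      (-1) ^ F.length.choose 2 * vandermonde F ^ 2 := by
    have h := prod_weight_mul_vandermonde_sq hF
    have hinv := List.prod_inv (F.map (weight F))
    rw [List.map_map] at hinv
    refine hinv.symm.trans (inv_eq_of_mul_eq_one_right ?_)
    rw [mul_left_comm, h, ← mul_pow, neg_one_mul, neg_neg, one_pow]
  simp [Function.comp_def, stripScale, Key.point, hinv, mul_assoc]

theorem vecDet_strip_moment {B₁ B₂ F : List ℂ} (hB0 : ∀ b ∈ B₂, b ≠ 0) (hF : F.Nodup)
    (hBF : ∀ b ∈ B₁ ++ B₂, b ∉ F) (hF0 : ∀ f ∈ F, f ≠ 0) (c : ℤ) {p₁ p₂ K₁ K₂ : ℕ}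
    (h₁ : K₁ ≤ F.length + p₁) (h₂ : K₂ ≤ F.length + p₂) :
    vecDet ((consec c K₂).map (extPower₂ c) ++ (consec 0 K₁).map (extPower₁ c))
        (F.map .fermi ++ (B₁.map .bose₁ ++ B₂.map .bose₂)) =
      (-1) ^ F.length.choose 2 * vandermonde F ^ 2 * ((B₁ ++ B₂).map (nodal F)).prod *
        vecDet ((consec 0 K₂).map (moment F (cauchy₂ (-c)) p₂ fun j => power₂ (j + c - 1)) ++
          (consec 0 K₁).map (moment F (cauchy₁ (-c)) p₁ fun j => power₁ (j - 1)))
          (F.map .fermi ++ (B₁.map .bose₁ ++ B₂.map .bose₂)) := by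
  have hext : (consec c K₂).map (extPower₂ c) = (consec 0 K₂).map fun l => extPower₂ c (l + c) := by
    simpa [Function.comp_def] using congrArg (List.map (extPower₂ c)) (consec_add 0 c K₂)
  rw [← prod_stripScale hF, ← vecDet_mul_keys, List.map_append, List.map_map, List.map_map, hext]
  refine (vecDet_congr (List.rel_append (forall₂_map_map fun l hl k hk => ?_)
    (forall₂_map_map fun l hl k hk => ?_))).symm
  · have hl := mem_consec.1 hl
    exact stripScale_mul_moment_cauchy₂ hB0 hF hBF c hl.1 (by omega) hk
  · have hl := mem_consec.1 hl
    exact stripScale_mul_moment_cauchy₁ hF hBF hF0 c hl.1 (by omega) hk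

/-- The common form of `extPower₁ c j` (for `0 ≤ j`) and `-extPower₂ c j` (for `j < 0`), extended
to the auxiliary keys so that its moments over `B₁` and `B₂` are the super moments. -/
noncomputable def gluedPower (c j : ℤ) : Key → ℂ
  | .fermi f => f ^ (j - c)
  | .bose₁ b => if 0 ≤ j then b ^ j else 0
  | .bose₂ b => if 0 ≤ j then 0 else -b ^ j
  | .aux₁ i => if j = -i then 1 else 0
  | .aux₂ _ => 0

theorem boseMoment_gluedPower {B₁ B₂ : List ℂ} (hB : (B₁ ++ B₂).Nodup)
    (hB0 : ∀ b ∈ B₁ ++ B₂, b ≠ 0) {a : ℕ} {l : ℤ} (hl : 0 ≤ l) (hla : l < a) (c j : ℤ) :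
    boseMoment B₁ B₂ (a - (B₁ ++ B₂).length) l (gluedPower c j) = superMoment B₁ B₂ (j + l) := by
  have hzpow : ∀ b ∈ B₁ ++ B₂, b ^ l * weight (B₁ ++ B₂) b * b ^ j =
      b ^ (j + l) * weight (B₁ ++ B₂) b := fun b hb => by
    rw [zpow_add₀ (hB0 b hb)]
    ring
  have h₁ := List.map_congr_left fun b hb => hzpow b (List.mem_append_left B₂ hb)
  have h₂ : (B₂.map fun b => b ^ l * weight (B₁ ++ B₂) b * -b ^ j).sum =
      -(B₂.map fun b => b ^ (j + l) * weight (B₁ ++ B₂) b).sum := by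
    rw [List.sum_neg, List.map_map]
    refine congrArg List.sum (List.map_congr_left fun b hb => ?_)
    rw [mul_neg, hzpow b (List.mem_append_right B₁ hb), Function.comp_apply]
  rcases le_or_gt 0 j with hj | hj
  · have haux : ((consec 1 (a - (B₁ ++ B₂).length)).map fun i =>
        powerMoment (B₁ ++ B₂) (l - i) * if j = -i then 1 else 0).sum = 0 :=
      List.sum_eq_zero fun x hx => by
        obtain ⟨i, hi, rfl⟩ := List.mem_map.1 hx
        rw [mem_consec] at hi
        rw [if_neg (by omega), mul_zero]
    simp only [boseMoment, gluedPower, if_pos hj, haux, h₁, superMoment,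
      powerMoment_of_nonneg (by omega : 0 ≤ j + l), List.map_append, List.sum_append]
    simp
  · have haux : ((consec 1 (a - (B₁ ++ B₂).length)).map fun i =>
        powerMoment (B₁ ++ B₂) (l - i) * if j = -i then 1 else 0).sum =
          powerMoment (B₁ ++ B₂) (j + l) := by
      by_cases hmem : -j ∈ consec 1 (a - (B₁ ++ B₂).length)
      · rw [sum_map_eq_single (nodup_consec _ _) hmem fun i _ hi => by
          rw [if_neg (by omega), mul_zero]]
        simp [add_comm]
      · rw [powerMoment_eq_zero hB (by rw [mem_consec] at hmem; omega)]
        refine List.sum_eq_zero fun x hx => ?_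
        obtain ⟨i, hi, rfl⟩ := List.mem_map.1 hx
        rw [if_neg fun h => hmem (by rwa [h, neg_neg]), mul_zero]
    simp only [boseMoment, gluedPower, if_neg hj.not_ge, haux, h₂, superMoment, mul_zero,
      List.map_const', List.sum_replicate, nsmul_zero, zero_add]
    ring

theorem vecDet_gluedPower {B₁ B₂ F : List ℂ} (hB : (B₁ ++ B₂).Nodup)
    (hB0 : ∀ b ∈ B₁ ++ B₂, b ≠ 0) (hF0 : ∀ f ∈ F, f ≠ 0) (a : ℕ) (c : ℤ) :
    vecDet ((consec 0 ((B₁ ++ B₂).length - a)).map power ++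
          (consec c (a + F.length)).map (gluedPower c))
        ((B₁.map .bose₁ ++ B₂.map .bose₂) ++
          ((consec 1 (a - (B₁ ++ B₂).length)).map .aux₁ ++ F.map .fermi)) =
      (-1) ^ ((B₁ ++ B₂).length.choose 2 + ((B₁ ++ B₂).length - a).choose 2 +
          a * ((B₁ ++ B₂).length - a) + a * F.length) *
        (vandermonde (B₁ ++ B₂) * vandermonde F * hankel (superSeq B₁ B₂ F) a c) := by
  have hrows : ((consec 0 a).map (boseMoment B₁ B₂ (a - (B₁ ++ B₂).length)) ++
      F.map fun f (φ : Key → ℂ) => φ (.fermi f)).map (· ∘ gluedPower c) =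
      ((consec 0 a).map fun l i => superMoment B₁ B₂ (i + l)) ++ F.map fun f i => f ^ (i - c) := by
    rw [List.map_append, List.map_map, List.map_map]
    refine congrArg₂ _ (List.map_congr_left fun l hl => funext fun j => ?_) rfl
    rw [mem_consec] at hl
    exact boseMoment_gluedPower hB hB0 hl.1 (by omega) c j
  have hzpow := vecDet_append_zpow ((consec 0 a).map fun l i => superMoment B₁ B₂ (i + l)) hF0 c
  rw [List.length_map, length_consec, List.map_map] at hzpow
  have hhankel : vecDet
      ((consec 0 a).map (iterChristoffel F ∘ fun l i => superMoment B₁ B₂ (i + l))) (consec c a) =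
      hankel (superSeq B₁ B₂ F) a c := by
    simp only [hankel, superSeq, Function.comp_def, iterChristoffel_comp_add]
  rw [vecDet_power_append hB (a := a) (by omega) (by omega), vecDet_map_keys, hrows, hzpow, hhankel,
    pow_add (-1 : ℂ) _ (a * F.length)]
  ring

theorem vecDet_extPower_eq_gluedPower (B₁ B₂ F : List ℂ) (P : List (Key → ℂ)) {q r : ℕ}
    (hr : r ≤ q) (K : ℕ) (c : ℤ) :
    vecDet (P ++ ((consec (-q) r).map (extPower₂ c) ++ (consec 0 K).map (extPower₁ c)))
        (F.map .fermi ++ (B₁.map .bose₁ ++ B₂.map .bose₂)) =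
      (-1) ^ r * vecDet (P ++ ((consec (-q) r).map (gluedPower c) ++
          (consec 0 K).map (gluedPower c)))
        (F.map .fermi ++ (B₁.map .bose₁ ++ B₂.map .bose₂)) := by
  let sign (j : ℤ) : ℂ := if 0 ≤ j then 1 else -1
  have hmul := vecDet_append_mul P (consec (-q) r ++ consec 0 K) sign (gluedPower c)
    (F.map .fermi ++ (B₁.map .bose₁ ++ B₂.map .bose₂))
  have hsign₁ : (consec (-q) r).map sign = (consec (-q) r).map fun _ => -1 :=
    List.map_congr_left fun j hj => if_neg (by rw [mem_consec] at hj; omega)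
  have hsign₂ : (consec 0 K).map sign = (consec 0 K).map fun _ => 1 :=
    List.map_congr_left fun j hj => if_pos (mem_consec.1 hj).1
  have hprod : ((consec (-q) r ++ consec 0 K).map sign).prod = (-1) ^ r := by
    simp [hsign₁, hsign₂]
  rw [hprod, List.map_append, List.map_append] at hmul
  rw [← hmul]
  refine vecDet_congr (List.rel_append (List.forall₂_same.2 fun _ _ _ _ => rfl)
    (List.rel_append (forall₂_map_map fun j hj k hk => ?_) (forall₂_map_map fun j hj k hk => ?_)))
  all_goals
    have hj := mem_consec.1 hj
    simp only [List.mem_append, List.mem_map] at hk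
  · have hneg : ¬ 0 ≤ j := by omega
    rcases hk with ⟨f, -, rfl⟩ | ⟨b, -, rfl⟩ | ⟨b, -, rfl⟩ <;>
      simp [sign, extPower₂, gluedPower, hneg]
  · rcases hk with ⟨f, -, rfl⟩ | ⟨b, -, rfl⟩ | ⟨b, -, rfl⟩ <;>
      simp [sign, extPower₁, gluedPower, hj.1]

theorem vecDet_extPower_of_le (B₁ B₂ F : List ℂ) {q D K : ℕ} (hD : D ≤ K) :
    vecDet ((consec (-q) (q + D)).map (extPower₂ (-q)) ++ (consec 0 K).map (extPower₁ (-q)))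
        (F.map .fermi ++ (B₁.map .bose₁ ++ B₂.map .bose₂)) =
      (-1) ^ (q * D + q) *
        vecDet ((consec 0 D).map power ++ (consec (-q) (q + K)).map (gluedPower (-q)))
          (F.map .fermi ++ (B₁.map .bose₁ ++ B₂.map .bose₂)) := by
  have hswap := vecDet_swap [] ((consec (-q) q).map (extPower₂ (-q)))
    ((consec 0 D).map (extPower₂ (-q))) ((consec 0 K).map (extPower₁ (-q)))
    (F.map .fermi ++ (B₁.map .bose₁ ++ B₂.map .bose₂))
  have hadd := vecDet_map_add_mul (L := consec 0 D) (extPower₂ (-q)) (fun _ => 1)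
    (w := extPower₁ (-q))
    (Y := (consec (-q) q).map (extPower₂ (-q)) ++ (consec 0 K).map (extPower₁ (-q)))
    (fun j hj => List.mem_append_right _ (List.mem_map_of_mem (by rw [mem_consec] at hj ⊢; omega)))
    (F.map .fermi ++ (B₁.map .bose₁ ++ B₂.map .bose₂))
  have hpower : (fun (j : ℤ) k => extPower₂ (-q) j k + 1 * extPower₁ (-q) j k) = power := by
    funext j k
    cases k <;> simp [extPower₁, extPower₂, power, power₁, power₂]
  simp only [List.nil_append, List.length_map, length_consec] at hswap
  rw [hpower] at hadd
  rw [← consec_append, ← consec_append, neg_add_cancel, List.map_append, List.map_append,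
    List.append_assoc, hswap, ← hadd, vecDet_extPower_eq_gluedPower B₁ B₂ F _ le_rfl, pow_add,
    mul_assoc]

theorem vecDet_gluedPower_aux₁ (r g K : ℕ) (c : ℤ) (ks : List Key) :
    vecDet ((consec (-(r + g : ℕ)) (r + g + K)).map (gluedPower c))
        ((consec 1 g).map .aux₁ ++ ks) =
      (-1) ^ (r * g + g.choose 2) * vecDet ((consec (-(r + g : ℕ)) r).map (gluedPower c) ++
        (consec 0 K).map (gluedPower c)) ks := by
  have hswap := vecDet_swap [] ((consec (-(r + g : ℕ)) r).map (gluedPower c))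
    ((consec (-g) g).map (gluedPower c)) ((consec 0 K).map (gluedPower c))
    ((consec 1 g).map .aux₁ ++ ks)
  have hgap : vecDet ((consec (-g) g).map (gluedPower c)) ((consec 1 g).map .aux₁) =
      (-1) ^ g.choose 2 := by
    rw [← listDet_eq_vecDet, listDet_map_right]
    refine listDet_antitriangular g (-g) 1 _ (fun j _ i _ h => if_neg (by omega)) fun j _ i _ h =>
      if_pos (by omega)
  have hzero : ∀ v ∈ (consec (-(r + g : ℕ)) r).map (gluedPower c) ++
      (consec 0 K).map (gluedPower c), ∀ k ∈ (consec 1 g).map Key.aux₁, v k = 0 := by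
    simp only [← List.map_append, List.mem_map, List.mem_append, mem_consec]
    rintro _ ⟨j, hj, rfl⟩ _ ⟨i, hi, rfl⟩
    exact if_neg (by omega)
  simp only [List.nil_append, List.length_map, length_consec] at hswap
  have hsplit : consec (-(r + g : ℕ)) (r + g + K) =
      consec (-(r + g : ℕ)) r ++ (consec (-g) g ++ consec 0 K) := by
    rw [← consec_append, ← consec_append, List.append_assoc]
    congr 3 <;> push_cast <;> ring
  rw [hsplit, List.map_append, List.map_append, hswap,
    vecDet_append_of_forall_eq_zero (by simp) hzero, hgap, pow_add, mul_assoc]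

theorem vecDet_extPower {B₁ B₂ F : List ℂ} (hB : (B₁ ++ B₂).Nodup)
    (hB0 : ∀ b ∈ B₁ ++ B₂, b ≠ 0) (hF0 : ∀ f ∈ F, f ≠ 0) {a q K₁ K₂ : ℕ}
    (hK₁ : K₁ + q = a + F.length) (hK₂ : K₂ + a = (B₁ ++ B₂).length + q)
    (hle : (B₁ ++ B₂).length ≤ a + K₁) :
    vecDet ((consec (-q) K₂).map (extPower₂ (-q)) ++ (consec 0 K₁).map (extPower₁ (-q)))
        (F.map .fermi ++ (B₁.map .bose₁ ++ B₂.map .bose₂)) =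
      (-1) ^ (a.choose 2 + K₂ * ((B₁ ++ B₂).length + a + 1) + F.length * (B₁ ++ B₂).length +
        a * F.length) *
        (vandermonde (B₁ ++ B₂) * vandermonde F * hankel (superSeq B₁ B₂ F) a (-q)) := by
  have hswap (vs : List (Key → ℂ)) (g : ℕ) :
      vecDet vs ((B₁.map .bose₁ ++ B₂.map .bose₂) ++ ((consec 1 g).map .aux₁ ++ F.map .fermi)) =
        (-1) ^ ((B₁ ++ B₂).length * (g + F.length)) * vecDet vs
          ((consec 1 g).map .aux₁ ++ (F.map .fermi ++ (B₁.map .bose₁ ++ B₂.map .bose₂))) := by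
    have h := vecDet_swap_keys vs [] (B₁.map .bose₁ ++ B₂.map .bose₂)
      ((consec 1 g).map .aux₁ ++ F.map .fermi) []
    simp only [List.nil_append, List.append_nil, List.append_assoc (List.map Key.aux₁ _)] at h
    simpa only [List.length_append, List.length_map, length_consec] using h
  have hglued := vecDet_gluedPower hB hB0 hF0 a (-q)
  rw [hswap] at hglued
  generalize (B₁ ++ B₂).length = m at *
  rcases le_total a m with hD | hD
  · obtain ⟨D, rfl⟩ := Nat.exists_eq_add_of_le hD
    obtain rfl : K₂ = q + D := by omega
    rw [Nat.add_sub_cancel_left, Nat.sub_eq_zero_of_le hD, ← hK₁, add_comm K₁, consec_zero,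
      List.map_nil, List.nil_append] at hglued
    rw [vecDet_extPower_of_le _ _ _ (by omega)]
    refine neg_one_pow_mul_eq_of_cast_eq hglued ?_
    have hsq : (D : ZMod 2) ^ 2 = D := ZMod.pow_card _
    push_cast [choose_two_add]
    grind
  · obtain ⟨g, rfl⟩ := Nat.exists_eq_add_of_le hD
    obtain rfl : q = K₂ + g := by omega
    rw [Nat.sub_eq_zero_of_le hD, Nat.add_sub_cancel_left, ← hK₁, add_comm K₁, consec_zero,
      List.map_nil, List.nil_append, vecDet_gluedPower_aux₁, ← mul_assoc, ← pow_add] at hglued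
    have hext := vecDet_extPower_eq_gluedPower B₁ B₂ F [] (Nat.le_add_right K₂ g) K₁ (-(K₂ + g : ℕ))
    rw [List.nil_append, List.nil_append] at hext
    rw [hext]
    refine neg_one_pow_mul_eq_of_cast_eq hglued ?_
    push_cast [choose_two_add, Nat.choose_zero_succ]
    grind

theorem strip_parity {n m a q K₁ K₂ k₁ k₂ p₁ p₂ : ℕ} (h₁ : n + p₁ = K₁ + k₁)
    (h₂ : n + p₂ = K₂ + k₂) (hkp₁ : k₁ = 0 ∨ p₁ = 0) (hkp₂ : k₂ = 0 ∨ p₂ = 0)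
    (hK₁ : K₁ + q = a + n) (hK₂ : K₂ + a = m + q) :
    (n * p₁ + (k₁ + k₂) * (n + m) + K₁ * k₁ + K₁ * (n + p₂) + K₂ * k₂ + K₂ * (m + a + 1) + n * m +
      a * n : ZMod 2) = (p₁ + q) * (p₂ + k₂) := by
  have hmod {x y : ℕ} (h : x = y) : (x : ZMod 2) = y := congrArg Nat.cast h
  have h₁ := hmod h₁
  have h₂ := hmod h₂
  have hK₁ := hmod hK₁
  have hK₂ := hmod hK₂
  push_cast at h₁ h₂ hK₁ hK₂
  have hK₁n : (K₁ : ZMod 2) = n + p₁ + k₁ := by grind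
  have hK₂n : (K₂ : ZMod 2) = n + p₂ + k₂ := by grind
  have ha : (a : ZMod 2) = p₁ + k₁ + q := by grind
  have hm : (m : ZMod 2) = n + p₂ + k₂ + p₁ + k₁ := by grind
  have hsq (x : ℕ) : (x : ZMod 2) ^ 2 = x := ZMod.pow_card _
  have hn := hsq n
  have hk₁ := hsq k₁
  have hk₂ := hsq k₂
  have hp₂ := hsq p₂
  rw [hK₁n, hK₂n, ha, hm]
  clear h₁ h₂ hK₁ hK₂ hK₁n hK₂n ha hm
  rcases hkp₁ with rfl | rfl <;> rcases hkp₂ with rfl | rfl <;> grind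

theorem vecDet_strip {B₁ B₂ F : List ℂ} (hB : (B₁ ++ B₂).Nodup) (hF : F.Nodup)
    (hBF : ∀ b ∈ B₁ ++ B₂, b ∉ F) (hB0 : ∀ b ∈ B₁ ++ B₂, b ≠ 0) (hF0 : ∀ f ∈ F, f ≠ 0)
    {a q K₁ K₂ k₁ k₂ p₁ p₂ : ℕ} (h₁ : F.length + p₁ = K₁ + k₁) (h₂ : F.length + p₂ = K₂ + k₂)
    (hkp₁ : k₁ = 0 ∨ p₁ = 0) (hkp₂ : k₂ = 0 ∨ p₂ = 0) (hK₁ : K₁ + q = a + F.length)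
    (hK₂ : K₂ + a = (B₁ ++ B₂).length + q) (hle : (B₁ ++ B₂).length ≤ a + K₁) :
    ((B₁ ++ B₂).map (nodal F)).prod *
        vecDet ((F.map fun f k => cauchy₁ q f k + f ^ (q : ℤ) * cauchy₂ q f k) ++
          (((consec 1 p₁).map fun j => power₁ (j - 1)) ++
            (consec (-q + 1) p₂).map fun j => power₂ (j - 1)))
          ((B₁.map .bose₁ ++ B₂.map .bose₂) ++
            ((consec 1 k₁).map .aux₁ ++ (consec 1 k₂).map .aux₂)) =
      (-1) ^ (a.choose 2 + F.length.choose 2 + k₁.choose 2 + k₂.choose 2 +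
          (p₁ + q) * (p₂ + k₂)) *
        (vandermonde (B₁ ++ B₂) * vandermonde F * hankel (superSeq B₁ B₂ F) a (-q)) := by
  have hadd := vecDet_cauchy₁_append_cauchy₂ hF q (W₁ := (consec 1 p₁).map fun j => power₁ (j - 1))
    (W₂ := (consec (-q + 1) p₂).map fun j => power₂ (j - 1)) ?_
    ((consec 1 k₁).map .aux₁ ++ (consec 1 k₂).map .aux₂) (B₁.map .bose₁ ++ B₂.map .bose₂)
  · have hfermi := vecDet_strip_fermi hF h₁ h₂ hkp₁ hkp₂ (-q)
      (F.map .fermi ++ (B₁.map .bose₁ ++ B₂.map .bose₂))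
    have hmoment := vecDet_strip_moment (fun b hb => hB0 b (List.mem_append_right _ hb)) hF hBF hF0
      (-q) (p₁ := p₁) (p₂ := p₂) (K₁ := K₁) (K₂ := K₂) (by omega) (by omega)
    have hext := vecDet_extPower hB hB0 hF0 hK₁ hK₂ hle
    rw [neg_neg] at hfermi hmoment
    rw [List.append_assoc, hfermi] at hadd
    rw [hext] at hmoment
    simp only [List.length_append (as := List.map _ _), List.length_map, length_consec,
      ← List.length_append (as := B₁)] at hadd
    rw [← one_mul (List.prod _ * _), ← pow_zero (-1 : ℂ)]
    refine neg_one_pow_mul_eq_of_cast_eq (u := F.length.choose 2 + (F.length * p₁ +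
      (k₁ + k₂) * (F.length + (B₁ ++ B₂).length))) (v := k₁.choose 2 + K₁ * k₁ +
      K₁ * (F.length + p₂) + k₂.choose 2 + K₂ * k₂ + (a.choose 2 + K₂ * ((B₁ ++ B₂).length + a + 1)
      + F.length * (B₁ ++ B₂).length + a * F.length)) ?_ ?_
    · rw [pow_add _ (F.length.choose 2), pow_add (-1 : ℂ) (_ + K₂ * k₂)]
      linear_combination - (-1) ^ F.length.choose 2 * ((B₁ ++ B₂).map (nodal F)).prod * hadd -
        (-1) ^ (k₁.choose 2 + K₁ * k₁ + K₁ * (F.length + p₂) + k₂.choose 2 + K₂ * k₂) * hmoment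
    · have hparity := strip_parity h₁ h₂ hkp₁ hkp₂ hK₁ hK₂
      push_cast
      grind
  · simp only [List.mem_append, List.mem_map]
    rintro _ (⟨j, -, rfl⟩ | ⟨j, -, rfl⟩) _ <;> rfl

theorem Delta_div_Dden_strip {B₁ B₂ F : List ℂ} (hB : (B₁ ++ B₂).Nodup) (hF : F.Nodup)
    (hBF : ∀ b ∈ B₁ ++ B₂, b ∉ F) (hB0 : ∀ b ∈ B₁ ++ B₂, b ≠ 0) (hF0 : ∀ f ∈ F, f ≠ 0)
    {a q K₁ K₂ k₁ k₂ p₁ p₂ : ℕ} (h₁ : F.length + p₁ = K₁ + k₁) (h₂ : F.length + p₂ = K₂ + k₂)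
    (hkp₁ : k₁ = 0 ∨ p₁ = 0) (hkp₂ : k₂ = 0 ∨ p₂ = 0) (hK₁ : K₁ + q = a + F.length)
    (hK₂ : K₂ + a = (B₁ ++ B₂).length + q) (hle : (B₁ ++ B₂).length ≤ a + K₁) :
    Delta id B₁ B₂ F (consec 1 k₁ ++ consec (q + 1) k₂) [] (consec 1 p₁) (consec (-q + 1) p₂) q /
        Dden id (B₁ ++ B₂) F =
      (-1) ^ (a.choose 2 + (B₁ ++ B₂).length.choose 2 + F.length.choose 2 + q * B₂.length +
        p₁ * (p₂ + k₂)) * hankel (superSeq B₁ B₂ F) a (-q) := by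
  have hdelta := Delta_eq_vecDet B₁ B₂ hF0 k₁ k₂ [] (consec 1 p₁) (consec (-q + 1) p₂) q
  have hstrip := vecDet_strip hB hF hBF hB0 hF0 h₁ h₂ hkp₁ hkp₂ hK₁ hK₂ hle
  have hsign : (-1 : ℂ) ^ (q * (B₂.length + p₂ + k₂) + k₁.choose 2 + k₂.choose 2 +
      (a.choose 2 + F.length.choose 2 + k₁.choose 2 + k₂.choose 2 + (p₁ + q) * (p₂ + k₂)) +
        (B₁ ++ B₂).length.choose 2) =
      (-1) ^ (a.choose 2 + (B₁ ++ B₂).length.choose 2 + F.length.choose 2 + q * B₂.length +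
        p₁ * (p₂ + k₂)) := by
    refine neg_one_pow_eq_of_cast_eq ?_
    push_cast
    grind
  simp only [List.map_nil, List.nil_append, length_consec] at hdelta
  rw [← hsign]
  rw [← List.append_assoc (B₁.map _)] at hdelta
  rw [hdelta]
  have hzpow : (-1 : ℂ) ^ ((q : ℤ) * (B₂.length + p₂ + k₂) + k₁.choose 2 + k₂.choose 2) =
      (-1) ^ (q * (B₂.length + p₂ + k₂) + k₁.choose 2 + k₂.choose 2) := by norm_cast
  rw [hzpow, pow_add _ (_ + _) ((B₁ ++ B₂).length.choose 2)]
  refine div_Dden_id hB hF ?_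
  rw [mul_left_comm, hstrip, ← mul_assoc, ← pow_add]

end Strip

section Degenerate

theorem hankel_superSeq_eq_zero {B₁ B₂ F : List ℂ} (hB : (B₁ ++ B₂).Nodup) (hF : F.Nodup)
    (hB0 : ∀ b ∈ B₁ ++ B₂, b ≠ 0) (hF0 : ∀ f ∈ F, f ≠ 0) {a : ℕ} {c : ℤ}
    (ha : (B₁ ++ B₂).length < a)
    (hc : (B₁ ++ B₂).length < c + a ∨ c + a + F.length < 0) :
    hankel (superSeq B₁ B₂ F) a c = 0 := by
  have hglued := vecDet_gluedPower hB hB0 hF0 a c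
  obtain ⟨i, hi, hic⟩ : ∃ i ∈ consec 1 (a - (B₁ ++ B₂).length),
      ∀ j ∈ consec c (a + F.length), j ≠ -i := by
    simp only [mem_consec]
    rcases hc with hc | hc
    · exact ⟨a - (B₁ ++ B₂).length, by omega, by omega⟩
    · exact ⟨1, by omega, by omega⟩
  rw [vecDet_eq_zero_of_key (k := .aux₁ i), zero_eq_mul, mul_eq_zero, mul_eq_zero] at hglued
  · simpa [vandermonde_ne_zero hB, vandermonde_ne_zero hF] using hglued
  · exact List.mem_append_right _ (List.mem_append_left _ (List.mem_map_of_mem hi))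
  · rw [Nat.sub_eq_zero_of_le ha.le, consec_zero, List.map_nil, List.nil_append]
    simp only [List.mem_map]
    rintro _ ⟨j, hj, rfl⟩
    exact if_neg (hic j hj)

end Degenerate

section Regions

variable {ι : Type*} {z : ι → ℂ} {B₁ B₂ F₁ F₂ : List ι} {χ : ℤ → ℤ → ℂ}

theorem IsChi.eq_right_wing (hχ : IsChi z B₁ B₂ F₁ F₂ χ) {a D p k : ℕ} {s : ℤ}
    (hm : (B₁ ++ B₂).length = a + D) (hn : (F₁ ++ F₂).length + p = D + k) (hpk : k = 0 ∨ p = 0)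
    (hs : a ≤ s + (B₁.length - F₁.length)) :
    χ a s = (-1) ^ (a * B₂.length + a * k + (B₁ ++ B₂).length.choose 2 +
        (F₁ ++ F₂).length.choose 2) *
      (Delta z B₁ B₂ (F₁ ++ F₂) (consec 1 k) (consec 1 p)
        (consec (s + (B₁.length - F₁.length) - a + 1) a) [] 0 / Dden z (B₁ ++ B₂) (F₁ ++ F₂)) := by
  obtain ⟨-, -, -, -, -, h₅, h₆, -, -⟩ := hχ
  simp only [← Nat.cast_add, int_mul_sub_one_div_two] at h₅ h₆
  simp only [List.length_append] at hm hn ⊢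
  have hT : s + (B₁.length - F₁.length) - a + 1 = s - a + (B₁.length - F₁.length) + 1 := by ring
  rw [hT, ← mul_div_assoc]
  rcases hpk with rfl | rfl
  · rw [h₅ a s hs (by omega), seg_of_length (n := p) (by omega), seg_of_length (n := a) (by omega)]
    congr 2
    exact neg_one_zpow_eq_of_cast_eq (by push_cast; ring)
  · rw [h₆ a s (by omega) hs, seg_of_length (n := k) (by omega), seg_of_length (n := a) (by omega)]
    congr 2
    refine neg_one_zpow_eq_of_cast_eq ?_
    have ha : (a : ZMod 2) ^ 2 = a := ZMod.pow_card _
    have hm' : (B₁.length + B₂.length : ZMod 2) = a + D := mod_cast congrArg Nat.cast hm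
    have hn' : (F₁.length + F₂.length : ZMod 2) = D + k := mod_cast congrArg Nat.cast hn
    push_cast
    grind

theorem IsChi.eq_left_wing (hχ : IsChi z B₁ B₂ F₁ F₂ χ) {a D p k : ℕ} {s : ℤ}
    (hm : (B₁ ++ B₂).length = a + D) (hn : (F₁ ++ F₂).length + p = D + k) (hpk : k = 0 ∨ p = 0)
    (hs : a ≤ -s + (B₂.length - F₂.length)) :
    χ a s = (-1) ^ (a * B₂.length + a + a * k + (B₁ ++ B₂).length.choose 2 +
        (F₁ ++ F₂).length.choose 2) *
      (Delta z B₁ B₂ (F₁ ++ F₂) (consec 1 k) (consec 1 p) []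
        (consec (s + (B₁.length - F₁.length) - a + 1) a) 0 / Dden z (B₁ ++ B₂) (F₁ ++ F₂)) := by
  obtain ⟨-, -, -, -, -, -, -, h₇, h₈⟩ := hχ
  simp only [← Nat.cast_add, int_mul_sub_one_div_two] at h₇ h₈
  simp only [List.length_append] at hm hn ⊢
  have hT : s + (B₁.length - F₁.length) - a + 1 = s - a + (B₁.length - F₁.length) + 1 := by ring
  rw [hT, ← mul_div_assoc]
  rcases hpk with rfl | rfl
  · rw [h₇ a s hs (by omega), seg_of_length (n := p) (by omega), seg_of_length (n := a) (by omega)]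
    congr 2
    exact neg_one_zpow_eq_of_cast_eq (by push_cast; ring)
  · rw [h₈ a s (by omega) hs, seg_of_length (n := k) (by omega), seg_of_length (n := a) (by omega)]
    congr 2
    refine neg_one_zpow_eq_of_cast_eq ?_
    have ha : (a : ZMod 2) ^ 2 = a := ZMod.pow_card _
    have hm' : (B₁.length + B₂.length : ZMod 2) = a + D := mod_cast congrArg Nat.cast hm
    have hn' : (F₁.length + F₂.length : ZMod 2) = D + k := mod_cast congrArg Nat.cast hn
    push_cast
    grind

theorem IsChi.eq_strip (hχ : IsChi z B₁ B₂ F₁ F₂ χ) {a q k₁ k₂ p₁ p₂ : ℕ} {s : ℤ}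
    (hs₁ : s + (B₁.length - F₁.length) = p₁ - k₁) (hs₂ : -s + (B₂.length - F₂.length) = p₂ - k₂)
    (hkp₁ : k₁ = 0 ∨ p₁ = 0) (hkp₂ : k₂ = 0 ∨ p₂ = 0)
    (hq : s + (B₁.length - F₁.length) + q = a) (hle : -s + (B₂.length - F₂.length) ≤ a) :
    χ a s = (-1) ^ ((p₁ + k₁) * B₂.length + p₁ * (p₂ + k₂) + (B₁ ++ B₂).length.choose 2 +
        (F₁ ++ F₂).length.choose 2) *
      (Delta z B₁ B₂ (F₁ ++ F₂) (consec 1 k₁ ++ consec (q + 1) k₂) [] (consec 1 p₁)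
        (consec (-q + 1) p₂) q / Dden z (B₁ ++ B₂) (F₁ ++ F₂)) := by
  obtain ⟨-, h₁, h₂, h₃, h₄, -, -, -, -⟩ := hχ
  simp only [← Nat.cast_add, int_mul_sub_one_div_two] at h₁ h₂ h₃ h₄
  have hη : a - s - (B₁.length - F₁.length) = q := by omega
  have hη' : s - a + (B₁.length - F₁.length) = -q := by omega
  have hsign₂ : (s + F₂.length : ZMod 2) = B₂.length + p₂ + k₂ := by
    have hs := congrArg (Int.cast : ℤ → ZMod 2) hs₂
    push_cast at hs
    grind
  have hsign₁ : (s + (B₁.length - F₁.length) : ZMod 2) = p₁ + k₁ := by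
    have hs := congrArg (Int.cast : ℤ → ZMod 2) hs₁
    push_cast at hs
    grind
  rw [List.length_append, List.length_append, ← mul_div_assoc]
  rcases hkp₁ with rfl | rfl <;> rcases hkp₂ with rfl | rfl
  · rw [h₁ a s (by omega) hle (by omega) (by omega) (by omega), hη, hη',
      seg_of_length (n := p₁) (by omega), seg_of_length (n := p₂) (by omega)]
    congr 2
    exact neg_one_zpow_eq_of_cast_eq (by push_cast; rw [hsign₂, hsign₁]; push_cast; ring)
  · rw [h₂ a s (by omega) hle (by omega) (by omega) (by omega), hη,
      seg_of_length (n := k₂) (by omega), seg_of_length (n := p₁) (by omega)]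
    congr 2
    exact neg_one_zpow_eq_of_cast_eq (by push_cast; rw [hsign₂, hsign₁]; push_cast; ring)
  · rw [h₃ a s (by omega) hle (by omega) (by omega) (by omega), hη, hη',
      seg_of_length (n := k₁) (by omega), seg_of_length (n := p₂) (by omega),
      consec_zero (_ + 1), List.append_nil]
    congr 2
    exact neg_one_zpow_eq_of_cast_eq (by push_cast; rw [hsign₁]; push_cast; ring)
  · rw [h₄ a s (by omega) hle (by omega) (by omega) (by omega), hη,
      seg_of_length (n := k₁) (by omega), seg_of_length (n := k₂) (by omega)]
    congr 2
    exact neg_one_zpow_eq_of_cast_eq (by push_cast; rw [hsign₁]; push_cast; ring)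

end Regions

section JacobiTrudi

/-- The lists of bosonic and fermionic parameters consist of pairwise distinct nonzero numbers. -/
structure IsGeneric (B F : List ℂ) : Prop where
  nodup_bose : B.Nodup
  nodup_fermi : F.Nodup
  notMem : ∀ b ∈ B, b ∉ F
  bose_ne_zero : ∀ b ∈ B, b ≠ 0
  fermi_ne_zero : ∀ f ∈ F, f ≠ 0

/-- The Jacobi–Trudi formula: `X a s` is, up to the sign `(-1) ^ (a M + a (a - 1) / 2)`, the Hankel
determinant of size `a` of the sequence `t` with first entry `t (s + η - a)`. -/
structure IsJacobiTrudi (t : ℤ → ℂ) (M : ℕ) (η : ℤ) (X : ℤ → ℤ → ℂ) : Prop where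
  eq_zero_of_neg : ∀ a s, a < 0 → X a s = 0
  eq_hankel : ∀ (a : ℕ) s, X a s = (-1) ^ (a * M + a.choose 2) * hankel t a (s + η - a)

variable {B₁ B₂ F₁ F₂ : List ℂ} {χ : ℤ → ℤ → ℂ}

theorem IsChi.eq_hankel_right_wing (hχ : IsChi id B₁ B₂ F₁ F₂ χ)
    (h : IsGeneric (B₁ ++ B₂) (F₁ ++ F₂)) {a : ℕ} {s : ℤ} (ha : a ≤ (B₁ ++ B₂).length)
    (hs : a ≤ s + (B₁.length - F₁.length)) :
    χ a s = (-1) ^ (a * B₂.length + a.choose 2) *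
      hankel (superSeq B₁ B₂ (F₁ ++ F₂)) a (s + (B₁.length - F₁.length) - a) := by
  obtain ⟨D, hD⟩ := Nat.exists_eq_add_of_le ha
  have hn : (F₁ ++ F₂).length + (D - (F₁ ++ F₂).length) = D + ((F₁ ++ F₂).length - D) := by omega
  have hpk : (F₁ ++ F₂).length - D = 0 ∨ D - (F₁ ++ F₂).length = 0 := by omega
  have hwing := Delta_div_Dden_wing h.nodup_bose h.nodup_fermi h.notMem h.fermi_ne_zero hD hn hpk
    (consec (s + (B₁.length - F₁.length) - a + 1) a) []
  rw [List.map_nil, List.append_nil, vecDet_boseMoment_power₁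
    (fun b hb => h.bose_ne_zero b (List.mem_append_left _ hb)) a (by omega)] at hwing
  rw [hχ.eq_right_wing hD hn hpk hs, hwing, ← mul_assoc, ← pow_add]
  congr 1
  refine neg_one_pow_eq_of_cast_eq ?_
  rw [hD, choose_two_add]
  push_cast
  grind

theorem IsChi.eq_hankel_left_wing (hχ : IsChi id B₁ B₂ F₁ F₂ χ)
    (h : IsGeneric (B₁ ++ B₂) (F₁ ++ F₂)) {a : ℕ} {s : ℤ} (ha : a ≤ (B₁ ++ B₂).length)
    (hs : a ≤ -s + (B₂.length - F₂.length)) :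
    χ a s = (-1) ^ (a * B₂.length + a.choose 2) *
      hankel (superSeq B₁ B₂ (F₁ ++ F₂)) a (s + (B₁.length - F₁.length) - a) := by
  obtain ⟨D, hD⟩ := Nat.exists_eq_add_of_le ha
  have hn : (F₁ ++ F₂).length + (D - (F₁ ++ F₂).length) = D + ((F₁ ++ F₂).length - D) := by omega
  have hpk : (F₁ ++ F₂).length - D = 0 ∨ D - (F₁ ++ F₂).length = 0 := by omega
  have hwing := Delta_div_Dden_wing h.nodup_bose h.nodup_fermi h.notMem h.fermi_ne_zero hD hn hpk
    [] (consec (s + (B₁.length - F₁.length) - a + 1) a)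
  rw [List.map_nil, List.nil_append, vecDet_boseMoment_power₂ h.nodup_bose
    (fun b hb => h.bose_ne_zero b (List.mem_append_right _ hb))
    (by simp only [List.length_append]; push_cast; omega)] at hwing
  rw [hχ.eq_left_wing hD hn hpk hs, hwing, ← mul_assoc, ← mul_assoc, ← pow_add, ← pow_add]
  congr 1
  refine neg_one_pow_eq_of_cast_eq ?_
  rw [hD, choose_two_add]
  push_cast
  grind

theorem IsChi.eq_hankel_strip (hχ : IsChi id B₁ B₂ F₁ F₂ χ)
    (h : IsGeneric (B₁ ++ B₂) (F₁ ++ F₂)) {a : ℕ} {s : ℤ}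
    (hs₁ : s + (B₁.length - F₁.length) ≤ a) (hs₂ : -s + (B₂.length - F₂.length) ≤ a)
    (hs₁' : s ≤ B₂.length + F₁.length) (hs₂' : -s ≤ B₁.length + F₂.length) :
    χ a s = (-1) ^ (a * B₂.length + a.choose 2) *
      hankel (superSeq B₁ B₂ (F₁ ++ F₂)) a (s + (B₁.length - F₁.length) - a) := by
  obtain ⟨q, hq⟩ := Int.eq_ofNat_of_zero_le (sub_nonneg.2 hs₁)
  obtain ⟨K₁, hK₁⟩ := Int.eq_ofNat_of_zero_le (show 0 ≤ s + B₁.length + F₂.length by omega)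
  obtain ⟨K₂, hK₂⟩ := Int.eq_ofNat_of_zero_le (show 0 ≤ B₂.length + F₁.length - s by omega)
  obtain ⟨p₁, k₁, hp₁, hkp₁⟩ : ∃ p k : ℕ,
      s + (B₁.length - F₁.length) = p - k ∧ (k = 0 ∨ p = 0) :=
    ⟨_, _, (Int.toNat_sub_toNat_neg _).symm, by omega⟩
  obtain ⟨p₂, k₂, hp₂, hkp₂⟩ : ∃ p k : ℕ,
      -s + (B₂.length - F₂.length) = p - k ∧ (k = 0 ∨ p = 0) :=
    ⟨_, _, (Int.toNat_sub_toNat_neg _).symm, by omega⟩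
  have hstrip := Delta_div_Dden_strip h.nodup_bose h.nodup_fermi h.notMem h.bose_ne_zero
    h.fermi_ne_zero (a := a) (q := q) (K₁ := K₁) (K₂ := K₂) (k₁ := k₁) (k₂ := k₂) (p₁ := p₁)
    (p₂ := p₂) (by simp; omega) (by simp; omega) hkp₁ hkp₂ (by simp; omega) (by simp; omega)
    (by simp; omega)
  have hc : s + (B₁.length - F₁.length) - a = -q := by omega
  rw [hχ.eq_strip (q := q) hp₁ hp₂ hkp₁ hkp₂ (by omega) hs₂, hstrip, hc, ← mul_assoc, ← pow_add]
  congr 1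
  refine neg_one_pow_eq_of_cast_eq ?_
  have hpa : (p₁ + q : ZMod 2) = a + k₁ := mod_cast congrArg Nat.cast (by omega : p₁ + q = a + k₁)
  push_cast
  grind

theorem IsChi.isJacobiTrudi_id (hχ : IsChi id B₁ B₂ F₁ F₂ χ)
    (h : IsGeneric (B₁ ++ B₂) (F₁ ++ F₂)) :
    IsJacobiTrudi (superSeq B₁ B₂ (F₁ ++ F₂)) B₂.length (B₁.length - F₁.length) χ where
  eq_zero_of_neg a s ha := hχ.1 a s (.inl ha)
  eq_hankel a s := by
    have hm : (B₁ ++ B₂).length = B₁.length + B₂.length := List.length_append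
    have hn : (F₁ ++ F₂).length = F₁.length + F₂.length := List.length_append
    by_cases hdeg : (B₁ ++ B₂).length < a ∧
        (B₂.length + F₁.length < s ∨ (B₁.length + F₂.length : ℤ) < -s)
    · rw [hχ.1 a s (by omega), hankel_superSeq_eq_zero h.nodup_bose h.nodup_fermi h.bose_ne_zero
        h.fermi_ne_zero hdeg.1 (by omega), mul_zero]
    by_cases hright : a ≤ (B₁ ++ B₂).length ∧ a ≤ s + (B₁.length - F₁.length : ℤ)
    · exact hχ.eq_hankel_right_wing h hright.1 hright.2
    by_cases hleft : a ≤ (B₁ ++ B₂).length ∧ a ≤ -s + (B₂.length - F₂.length : ℤ)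
    · exact hχ.eq_hankel_left_wing h hleft.1 hleft.2
    exact hχ.eq_hankel_strip h (by omega) (by omega) (by omega) (by omega)

end JacobiTrudi

section Backlund

theorem IsJacobiTrudi.backlund₁ {t : ℤ → ℂ} {M : ℕ} {η : ℤ} {X Y : ℤ → ℤ → ℂ} {x : ℂ}
    (hX : IsJacobiTrudi t M η X) (hY : IsJacobiTrudi (christoffel x t) M (η - 1) Y) (hx : x ≠ 0)
    (a s : ℤ) :
    X (a + 1) s * Y a s - X a s * Y (a + 1) s = x * X (a + 1) (s - 1) * Y a (s + 1) := by
  rcases lt_or_ge a 0 with ha | ha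
  · rw [hX.eq_zero_of_neg a s ha, hY.eq_zero_of_neg a s ha, hY.eq_zero_of_neg a (s + 1) ha]
    ring
  lift a to ℕ using ha
  have h := hankel_plucker₁ hx t a (s + η - a)
  rw [show (a : ℤ) + 1 = (a + 1 : ℕ) by push_cast; ring, hX.eq_hankel, hX.eq_hankel, hX.eq_hankel,
    hY.eq_hankel, hY.eq_hankel, hY.eq_hankel]
  push_cast
  rw [show s + η - ((a : ℤ) + 1) = s + η - a - 1 by ring,
    show s + (η - 1) - (a : ℤ) = s + η - a - 1 by ring,
    show s + (η - 1) - ((a : ℤ) + 1) = s + η - a - 2 by ring,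
    show s - 1 + η - ((a : ℤ) + 1) = s + η - a - 2 by ring,
    show s + 1 + (η - 1) - (a : ℤ) = s + η - a by ring]
  linear_combination
    (-1) ^ ((a + 1) * M + (a + 1).choose 2) * (-1) ^ (a * M + a.choose 2) * h

theorem IsJacobiTrudi.backlund₂ {t : ℤ → ℂ} {M : ℕ} {η : ℤ} {X Y : ℤ → ℤ → ℂ} {x : ℂ}
    (hX : IsJacobiTrudi t M η X) (hY : IsJacobiTrudi (christoffel x t) M (η - 1) Y) (hx : x ≠ 0)
    (a s : ℤ) :
    X a (s + 1) * Y a s - X a s * Y a (s + 1) = x * X (a + 1) s * Y (a - 1) (s + 1) := by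
  rcases lt_or_ge a 0 with ha | ha
  · rw [hX.eq_zero_of_neg a s ha, hY.eq_zero_of_neg a s ha,
      hY.eq_zero_of_neg (a - 1) (s + 1) (by omega)]
    ring
  lift a to ℕ using ha
  cases a with
  | zero =>
    rw [hY.eq_zero_of_neg (_ - 1) (s + 1) (by simp), hX.eq_hankel, hX.eq_hankel, hY.eq_hankel,
      hY.eq_hankel]
    simp only [hankel_zero]
    ring
  | succ a =>
    have h := hankel_plucker₂ hx t a (s + η - a - 1)
    have hsq : ((-1 : ℂ) ^ ((a + 1) * M + (a + 1).choose 2)) ^ 2 = 1 := by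
      rw [← pow_mul, pow_mul', neg_one_sq, one_pow]
    have hsign : (-1 : ℂ) ^ ((a + 2) * M + (a + 2).choose 2) *
        (-1) ^ (a * M + a.choose 2) = -1 := by
      rw [← pow_add]
      refine (neg_one_pow_eq_of_cast_eq (y := 1) ?_).trans (pow_one _)
      rw [choose_two_add, Nat.choose_self]
      push_cast
      grind
    rw [show ((a + 1 : ℕ) : ℤ) - 1 = a by push_cast; ring,
      show ((a + 1 : ℕ) : ℤ) + 1 = (a + 2 : ℕ) by push_cast; ring, hX.eq_hankel, hX.eq_hankel,
      hX.eq_hankel, hY.eq_hankel, hY.eq_hankel, hY.eq_hankel]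
    push_cast
    rw [show s + 1 + η - ((a : ℤ) + 1) = s + η - a - 1 + 1 by ring,
      show s + (η - 1) - ((a : ℤ) + 1) = s + η - a - 1 - 1 by ring,
      show s + 1 + (η - 1) - ((a : ℤ) + 1) = s + η - a - 1 by ring,
      show s + η - ((a : ℤ) + 1) = s + η - a - 1 by ring,
      show s + η - ((a : ℤ) + 2) = s + η - a - 1 - 1 by ring,
      show s + 1 + (η - 1) - (a : ℤ) = s + η - a - 1 + 1 by ring]
    linear_combination -h + (hankel t (a + 1) (s + η - a - 1 + 1) *
        hankel (christoffel x t) (a + 1) (s + η - a - 1 - 1) - hankel t (a + 1) (s + η - a - 1) *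
        hankel (christoffel x t) (a + 1) (s + η - a - 1)) * hsq -
      x * hankel t (a + 2) (s + η - a - 1 - 1) *
        hankel (christoffel x t) a (s + η - a - 1 + 1) * hsign

theorem IsGeneric.of_nodup_append {B F : List ℂ} (h : (B ++ F).Nodup)
    (h0 : ∀ x ∈ B ++ F, x ≠ 0) : IsGeneric B F :=
  ⟨h.of_append_left, h.of_append_right, fun _ hb hf => List.disjoint_of_nodup_append h hb hf,
    fun b hb => h0 b (List.mem_append_left _ hb), fun f hf => h0 f (List.mem_append_right _ hf)⟩

theorem IsGeneric.sublist {B B' F F' : List ℂ} (h : IsGeneric B F) (hB : B'.Sublist B)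
    (hF : F'.Sublist F) : IsGeneric B' F' :=
  ⟨h.nodup_bose.sublist hB, h.nodup_fermi.sublist hF,
    fun b hb hf => h.notMem b (hB.subset hb) (hF.subset hf),
    fun b hb => h.bose_ne_zero b (hB.subset hb), fun f hf => h.fermi_ne_zero f (hF.subset hf)⟩

theorem superSeq_eq_christoffel_of_perm_bose {b : ℂ} {B₁ B₁' B₂ : List ℂ} (h : B₁.Perm (b :: B₁'))
    (hB : (B₁ ++ B₂).Nodup) (hB₂ : ∀ x ∈ B₂, x ≠ 0) (F : List ℂ) :
    superSeq B₁' B₂ F = christoffel b (superSeq B₁ B₂ F) := by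
  rw [superSeq, superSeq, superMoment_perm h, ← iterChristoffel_christoffel,
    ← superMoment_cons ((h.append_right B₂).nodup_iff.1 hB) hB₂]

theorem superSeq_eq_christoffel_of_perm_fermi {f : ℂ} {F F' : List ℂ} (h : F.Perm (f :: F'))
    (B₁ B₂ : List ℂ) : superSeq B₁ B₂ F = christoffel f (superSeq B₁ B₂ F') := by
  rw [superSeq, superSeq, iterChristoffel_perm h, ← iterChristoffel_christoffel]
  rfl

theorem IsChi.isJacobiTrudi {ι : Type*} {z : ι → ℂ} {B₁ B₂ F₁ F₂ : List ι} {χ : ℤ → ℤ → ℂ}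
    (hχ : IsChi z B₁ B₂ F₁ F₂ χ) (h : IsGeneric ((B₁ ++ B₂).map z) ((F₁ ++ F₂).map z)) :
    IsJacobiTrudi (superSeq (B₁.map z) (B₂.map z) ((F₁ ++ F₂).map z)) B₂.length
      (B₁.length - F₁.length) χ := by
  rw [List.map_append, List.map_append] at h
  simpa only [List.length_map, List.map_append] using hχ.map.isJacobiTrudi_id h

theorem IsChi.isJacobiTrudi_erase_bose {ι : Type*} [DecidableEq ι] {z : ι → ℂ}
    {B₁ B₂ F₁ F₂ : List ι} {b : ι} {χ : ℤ → ℤ → ℂ} (hχ : IsChi z (B₁.erase b) B₂ F₁ F₂ χ)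
    (hb : b ∈ B₁) (h : IsGeneric ((B₁ ++ B₂).map z) ((F₁ ++ F₂).map z)) :
    IsJacobiTrudi (christoffel (z b) (superSeq (B₁.map z) (B₂.map z) ((F₁ ++ F₂).map z)))
      B₂.length (B₁.length - F₁.length - 1) χ := by
  have hsub : (B₁.erase b ++ B₂).Sublist (B₁ ++ B₂) := List.erase_sublist.append_right _
  have hlen : (B₁.length : ℤ) - F₁.length - 1 = (B₁.erase b).length - F₁.length := by
    rw [List.length_erase_of_mem hb, Nat.cast_pred (List.length_pos_of_mem hb)]
    ring
  have hnodup := h.nodup_bose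
  have hne := h.bose_ne_zero
  rw [List.map_append] at hnodup hne
  rw [hlen, ← superSeq_eq_christoffel_of_perm_bose ((List.perm_cons_erase hb).map z) hnodup
    fun x hx => hne x (List.mem_append_right _ hx)]
  exact hχ.isJacobiTrudi (h.sublist (hsub.map z) (.refl _))

theorem IsChi.isJacobiTrudi_of_mem_fermi {ι : Type*} [DecidableEq ι] {z : ι → ℂ}
    {B₁ B₂ F₁ F₂ : List ι} {f : ι} {χ : ℤ → ℤ → ℂ} (hχ : IsChi z B₁ B₂ F₁ F₂ χ)
    (hf : f ∈ F₁) (h : IsGeneric ((B₁ ++ B₂).map z) ((F₁ ++ F₂).map z)) :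
    IsJacobiTrudi (christoffel (z f) (superSeq (B₁.map z) (B₂.map z) ((F₁.erase f ++ F₂).map z)))
      B₂.length (B₁.length - (F₁.erase f).length - 1) χ := by
  have hlen : (B₁.length : ℤ) - (F₁.erase f).length - 1 = B₁.length - F₁.length := by
    rw [List.length_erase_of_mem hf, Nat.cast_pred (List.length_pos_of_mem hf)]
    ring
  have hperm : ((F₁ ++ F₂).map z).Perm (z f :: (F₁.erase f ++ F₂).map z) :=
    ((List.perm_cons_erase hf).append_right F₂).map z
  rw [hlen, ← superSeq_eq_christoffel_of_perm_fermi hperm]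
  exact hχ.isJacobiTrudi h

end Backlund

/-- **Right-wing Bäcklund transformations for the Wronskian supercharacters.** -/
theorem backlund_right {ι : Type*} [DecidableEq ι] (z : ι → ℂ) (B1 B2 F1 F2 : List ι)
    (hnd : (B1 ++ B2 ++ F1 ++ F2).Nodup)
    (hz0 : ∀ i ∈ B1 ++ B2 ++ F1 ++ F2, z i ≠ 0)
    (hzd : ∀ i ∈ B1 ++ B2 ++ F1 ++ F2, ∀ j ∈ B1 ++ B2 ++ F1 ++ F2, i ≠ j → z i ≠ z j)
    (b : ι) (hb : b ∈ B1) (f : ι) (hf : f ∈ F1)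
    (χ χb χf : ℤ → ℤ → ℂ)
    (hχ : IsChi z B1 B2 F1 F2 χ)
    (hχb : IsChi z (B1.erase b) B2 F1 F2 χb)
    (hχf : IsChi z B1 B2 (F1.erase f) F2 χf) :
    (∀ a s : ℤ,
      χ (a + 1) s * χb a s - χ a s * χb (a + 1) s = z b * χ (a + 1) (s - 1) * χb a (s + 1)) ∧
    (∀ a s : ℤ,
      χ a (s + 1) * χb a s - χ a s * χb a (s + 1) = z b * χ (a + 1) s * χb (a - 1) (s + 1)) ∧
    (∀ a s : ℤ,
      χf (a + 1) s * χ a s - χf a s * χ (a + 1) s = z f * χf (a + 1) (s - 1) * χ a (s + 1)) ∧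
    (∀ a s : ℤ,
      χf a (s + 1) * χ a s - χf a s * χ a (s + 1) = z f * χf (a + 1) s * χ (a - 1) (s + 1)) := by
  have hinj : Set.InjOn z {i | i ∈ B1 ++ B2 ++ F1 ++ F2} := fun i hi j hj =>
    not_imp_not.1 (hzd i hi j hj)
  have hgen : IsGeneric ((B1 ++ B2).map z) ((F1 ++ F2).map z) := by
    apply IsGeneric.of_nodup_append <;> rw [← List.map_append, ← List.append_assoc]
    · exact hnd.map_on fun i hi j hj => (hinj hi hj ·)
    · exact List.forall_mem_map.2 hz0
  have hF : (F1.erase f ++ F2).Sublist (F1 ++ F2) := List.erase_sublist.append_right _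
  have hX := hχ.isJacobiTrudi hgen
  have hXb := hχb.isJacobiTrudi_erase_bose hb hgen
  have hXf := hχf.isJacobiTrudi (hgen.sublist (.refl _) (hF.map z))
  have hX' := hχ.isJacobiTrudi_of_mem_fermi hf hgen
  have hzb : z b ≠ 0 := hz0 b (by simp [hb])
  have hzf : z f ≠ 0 := hz0 f (by simp [hf])
  exact ⟨hX.backlund₁ hXb hzb, hX.backlund₂ hXb hzb, hXf.backlund₁ hX' hzf,
    hXf.backlund₂ hX' hzf⟩

end Stmt1
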